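/- arXiv:math/0212290 — 2 statements merged into one kernel-verified Lean document; each statement's English description precedes it below -/
import Mathlib

section
/- For every z ∈ k^×, the formulas defining P_3(z) and P̃_3(z) endow the respective 3-dimensional k-vector spaces with H_k-module structures, and both H_k-modules P_3(z) and P̃_3(z) are simple. -/
/-- The defining relations of the affine Hecke algebra of type `A_2` (for `Gl_3`),
on the free algebra on four generators `T = X 0`, `T⁻¹ = X 1`, `S_1 = X 2`, `S_2 = X 3`. -/
inductive HeckeRel (R : Type) [CommRing R] (q : R) :
    FreeAlgebra R (Fin 4) → FreeAlgebra R (Fin 4) → Prop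
  | TTinv : HeckeRel R q (FreeAlgebra.ι R 0 * FreeAlgebra.ι R 1) 1
  | TinvT : HeckeRel R q (FreeAlgebra.ι R 1 * FreeAlgebra.ι R 0) 1
  | quad : HeckeRel R q
      ((FreeAlgebra.ι R 2 + 1) * (FreeAlgebra.ι R 2 - algebraMap R (FreeAlgebra R (Fin 4)) q)) 0
  | T3S1 : HeckeRel R q (FreeAlgebra.ι R 0 ^ 3 * FreeAlgebra.ι R 2)
      (FreeAlgebra.ι R 2 * FreeAlgebra.ι R 0 ^ 3)
  | braid : HeckeRel R q (FreeAlgebra.ι R 2 * FreeAlgebra.ι R 3 * FreeAlgebra.ι R 2)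
      (FreeAlgebra.ι R 3 * FreeAlgebra.ι R 2 * FreeAlgebra.ι R 3)
  | TS2 : HeckeRel R q (FreeAlgebra.ι R 0 * FreeAlgebra.ι R 3)
      (FreeAlgebra.ι R 2 * FreeAlgebra.ι R 0)

/-- The affine Hecke algebra `H_R` with parameter `q ∈ R`. -/
abbrev HeckeAlg (R : Type) [CommRing R] (q : R) := RingQuot (HeckeRel R q)

namespace HeckeAlg

variable (R : Type) [CommRing R] (q : R)

noncomputable def gen (i : Fin 4) : HeckeAlg R q :=
  RingQuot.mkAlgHom R (HeckeRel R q) (FreeAlgebra.ι R i)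

noncomputable def T : HeckeAlg R q := gen R q 0
noncomputable def Tinv : HeckeAlg R q := gen R q 1
noncomputable def S1 : HeckeAlg R q := gen R q 2
noncomputable def S2 : HeckeAlg R q := gen R q 3

theorem T_mul_Tinv : T R q * Tinv R q = 1 := by
  simpa [T, Tinv, gen, map_mul, map_one] using
    RingQuot.mkAlgHom_rel R (HeckeRel.TTinv (R := R) (q := q))

theorem Tinv_mul_T : Tinv R q * T R q = 1 := by
  simpa [T, Tinv, gen, map_mul, map_one] using
    RingQuot.mkAlgHom_rel R (HeckeRel.TinvT (R := R) (q := q))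

theorem quad_rel : (S1 R q + 1) * (S1 R q - algebraMap R (HeckeAlg R q) q) = 0 := by
  simpa [S1, gen, map_mul, map_add, map_sub, map_one, map_zero, AlgHom.commutes] using
    RingQuot.mkAlgHom_rel R (HeckeRel.quad (R := R) (q := q))

theorem T3_mul_S1 : T R q ^ 3 * S1 R q = S1 R q * T R q ^ 3 := by
  simpa [T, S1, gen, map_mul, map_pow] using
    RingQuot.mkAlgHom_rel R (HeckeRel.T3S1 (R := R) (q := q))

theorem braid_rel : S1 R q * S2 R q * S1 R q = S2 R q * S1 R q * S2 R q := by
  simpa [S1, S2, gen, map_mul] using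
    RingQuot.mkAlgHom_rel R (HeckeRel.braid (R := R) (q := q))

theorem T_mul_S2 : T R q * S2 R q = S1 R q * T R q := by
  simpa [T, S1, S2, gen, map_mul] using
    RingQuot.mkAlgHom_rel R (HeckeRel.TS2 (R := R) (q := q))

/-- The canonical (base change) ring homomorphism `H_R → H_S` induced by a ring
homomorphism `R → S` sending the parameter `q` to the parameter `q'`. -/
noncomputable def map {R S : Type} [CommRing R] [CommRing S] (f : R →+* S) (q : R) (q' : S)
    (h : f q = q') : HeckeAlg R q →+* HeckeAlg S q' := by
  subst h
  letI : Algebra R (HeckeAlg S (f q)) :=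
    RingHom.toAlgebra' ((algebraMap S (HeckeAlg S (f q))).comp f)
      (fun c x => by simpa using Algebra.commutes (f c) x)
  refine RingQuot.lift
    ⟨((FreeAlgebra.lift R fun i => gen S (f q) i : _ →ₐ[R] HeckeAlg S (f q)) :
        FreeAlgebra R (Fin 4) →+* HeckeAlg S (f q)), ?_⟩
  have key : ∀ i : Fin 4,
      (FreeAlgebra.lift R fun j => gen S (f q) j) (FreeAlgebra.ι R i) = gen S (f q) i :=
    fun i => FreeAlgebra.lift_ι_apply _ _
  have keyq : (FreeAlgebra.lift R fun j => gen S (f q) j)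
      (algebraMap R (FreeAlgebra R (Fin 4)) q) = algebraMap S (HeckeAlg S (f q)) (f q) := by
    rw [AlgHom.commutes]
    rfl
  intro a b hab
  cases hab with
  | TTinv => simpa [key, T, Tinv] using T_mul_Tinv S (f q)
  | TinvT => simpa [key, T, Tinv] using Tinv_mul_T S (f q)
  | quad => simpa [key, keyq, S1] using quad_rel S (f q)
  | T3S1 => simpa [key, T, S1] using T3_mul_S1 S (f q)
  | braid => simpa [key, S1, S2] using braid_rel S (f q)
  | TS2 => simpa [key, T, S1, S2] using T_mul_S2 S (f q)

/-- `S_1⁻¹ = q⁻¹ (S_1 - q + 1)`, where `qi` is an inverse of `q` in `R`. -/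
noncomputable def S1i (qi : R) : HeckeAlg R q :=
  algebraMap R (HeckeAlg R q) qi * (S1 R q - algebraMap R (HeckeAlg R q) q + 1)

/-- `S_2⁻¹ = q⁻¹ (S_2 - q + 1)`, where `qi` is an inverse of `q` in `R`. -/
noncomputable def S2i (qi : R) : HeckeAlg R q :=
  algebraMap R (HeckeAlg R q) qi * (S2 R q - algebraMap R (HeckeAlg R q) q + 1)

/-- The Bernstein elements `Y_1 = q S_1⁻¹ S_2⁻¹ T`, `Y_2 = S_2⁻¹ T S_1`,
`Y_3 = q⁻¹ T S_1 S_2`, where `qi` is an inverse of `q` in `R`. -/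
noncomputable def Y (qi : R) : Fin 3 → HeckeAlg R q :=
  ![algebraMap R (HeckeAlg R q) q * S1i R q qi * S2i R q qi * T R q,
    S2i R q qi * T R q * S1 R q,
    algebraMap R (HeckeAlg R q) qi * T R q * S1 R q * S2 R q]

end HeckeAlg

noncomputable section

variable (p : ℕ) [Fact p.Prime] (k : Type) [Field k] [IsAlgClosed k] [CharP k p]

/-- `H_k = H ⊗_{ℤ[q]} k` with `q ↦ 0`. -/
abbrev Hk : Type := HeckeAlg k 0

/-- The action of `T` on a `1`-dimensional space: multiplication by `c`. -/
def Tmat1 (c : k) : Module.End k (Fin 1 → k) := Matrix.mulVecLin !![c]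

/-- The action of `T` on the `2`-dimensional space with basis `w, Tw` where
`T(Tw) = -y²w - yTw`. -/
def Tmat2 (y : k) : Module.End k (Fin 2 → k) := Matrix.mulVecLin !![0, -y^2; 1, -y]

/-- The action of `T` on the `3`-dimensional space with basis `v, Tv, T²v` where
`T(T²v) = zv`. -/
def Tmat3 (z : k) : Module.End k (Fin 3 → k) := Matrix.mulVecLin !![0, 0, z; 1, 0, 0; 0, 1, 0]

/-- The action of `T` on the `6`-dimensional space with basis `v, Tv, T²v, w, Tw, T²w`
where `T(T²v) = zv`, `T(T²w) = zw`. -/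
def Tmat6 (z : k) : Module.End k (Fin 6 → k) := Matrix.mulVecLin
  !![0, 0, z, 0, 0, 0;
     1, 0, 0, 0, 0, 0;
     0, 1, 0, 0, 0, 0;
     0, 0, 0, 0, 0, z;
     0, 0, 0, 1, 0, 0;
     0, 0, 0, 0, 1, 0]

/-- The action of `S_1` on `L_6(z,y)`: `S_1v = 0`, `S_1(Tv) = T²w`, `S_1(T²v) = -T²v`,
`S_1w = -w`, `S_1(Tw) = (y/z)T²v`, `S_1(T²w) = -T²w`. -/
def SL6 (z y : k) : Module.End k (Fin 6 → k) := Matrix.mulVecLin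
  !![0, 0, 0,  0,  0,     0;
     0, 0, 0,  0,  0,     0;
     0, 0, -1, 0,  y / z, 0;
     0, 0, 0,  -1, 0,     0;
     0, 0, 0,  0,  0,     0;
     0, 1, 0,  0,  0,     -1]

/-- The action of `S_1` on `L̃_6(z,y)`: as on `L_6(z,y)` except `S_1v = w`, `S_1(Tv) = 0`. -/
def SLt6 (z y : k) : Module.End k (Fin 6 → k) := Matrix.mulVecLin
  !![0, 0, 0,  0,  0,     0;
     0, 0, 0,  0,  0,     0;
     0, 0, -1, 0,  y / z, 0;
     1, 0, 0,  -1, 0,     0;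
     0, 0, 0,  0,  0,     0;
     0, 0, 0,  0,  0,     -1]

/-- The action of `S_1` on `K_6(z,y,y')`: `S_1v = w`, `S_1(Tv) = (y/y')T²w`,
`S_1(T²v) = -T²v`, `S_1w = -w`, `S_1(Tw) = (y'/z)T²v`, `S_1(T²w) = -T²w`. -/
def SK6 (z y y' : k) : Module.End k (Fin 6 → k) := Matrix.mulVecLin
  !![0, 0,      0,  0,  0,      0;
     0, 0,      0,  0,  0,      0;
     0, 0,      -1, 0,  y' / z, 0;
     1, 0,      0,  -1, 0,      0;
     0, 0,      0,  0,  0,      0;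
     0, y / y', 0,  0,  0,      -1]

/-- The action of `S_1` on `M_3(z,y)`: `S_1v = 0`, `S_1(Tv) = y⁻¹T²v`, `S_1(T²v) = -T²v`. -/
def SM3 (y : k) : Module.End k (Fin 3 → k) := Matrix.mulVecLin
  !![0, 0, 0; 0, 0, 0; 0, y⁻¹, -1]

/-- The action of `S_1` on `M̃_3(z,y)`: `S_1v = -v`, `S_1(Tv) = -y⁻¹T²v`, `S_1(T²v) = -T²v`. -/
def SMt3 (y : k) : Module.End k (Fin 3 → k) := Matrix.mulVecLin
  !![-1, 0, 0; 0, 0, 0; 0, -y⁻¹, -1]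

/-- The action of `S_1` on `N_3(z,y)`: `S_1v = -v`, `S_1(Tv) = 0`, `S_1(T²v) = -yTv - T²v`. -/
def SN3 (y : k) : Module.End k (Fin 3 → k) := Matrix.mulVecLin
  !![-1, 0, 0; 0, 0, -y; 0, 0, -1]

/-- The action of `S_1` on `Ñ_3(z,y)`: `S_1v = 0`, `S_1(Tv) = 0`, `S_1(T²v) = yTv - T²v`. -/
def SNt3 (y : k) : Module.End k (Fin 3 → k) := Matrix.mulVecLin
  !![0, 0, 0; 0, 0, y; 0, 0, -1]

/-- The action of `S_1` on `P_3(z)`: `S_1v = 0`, `S_1(Tv) = 0`, `S_1(T²v) = -T²v`. -/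
def SP3 : Module.End k (Fin 3 → k) := Matrix.mulVecLin
  !![0, 0, 0; 0, 0, 0; 0, 0, -1]

/-- The action of `S_1` on `P̃_3(z)`: `S_1v = -v`, `S_1(Tv) = 0`, `S_1(T²v) = -T²v`. -/
def SPt3 : Module.End k (Fin 3 → k) := Matrix.mulVecLin
  !![-1, 0, 0; 0, 0, 0; 0, 0, -1]

/-- The action of `S_1` on `M_2(y)`: `S_1w = -w`, `S_1(Tw) = 0`. -/
def SM2 : Module.End k (Fin 2 → k) := Matrix.mulVecLin !![-1, 0; 0, 0]

/-- The action of `S_1` on `M̃_2(y)`: `S_1w = 0`, `S_1(Tw) = -Tw`. -/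
def SMt2 : Module.End k (Fin 2 → k) := Matrix.mulVecLin !![0, 0; 0, -1]

end

/-! On both modules `T` is a cyclic shift with `T³ = z` and `S_1` is diagonal with entries in
`{0, -1}`. Conjugating by `T` permutes the diagonal entries, so `S_2 = T⁻¹ S_1 T` commutes with
`S_1`; since `S_1² = -S_1` and `S_2² = -S_2`, both sides of the braid relation equal `-S_1 S_2`.

In both cases exactly one diagonal entry `d j` of `S_1` differs from the common value `c` of the
others, so `(d j - c)⁻¹ (S_1 - c)` is the projection onto the `j`-th coordinate line. If an
invariant subspace has a vector with nonzero `j`-th coordinate, it contains the `j`-th basis vector,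
whose translates under `T` span; otherwise invariance under `T` makes all coordinates vanish. -/

namespace HeckeAlg

variable {R : Type} [CommRing R] {q : R} {A : Type*} [Ring A] [Algebra R A]

/-- The universal property of `H_R`, phrased without `S_2`: the relation `T S_2 = S_1 T` forces
`S_2 = T⁻¹ S_1 T`. -/
noncomputable def lift (t : Aˣ) (s : A) (quad : (s + 1) * (s - algebraMap R A q) = 0)
    (comm : Commute ((t : A) ^ 3) s)
    (braid : s * (↑t⁻¹ * s * t) * s = ↑t⁻¹ * s * t * s * (↑t⁻¹ * s * t)) :
    HeckeAlg R q →ₐ[R] A :=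
  RingQuot.liftAlgHom R
    ⟨FreeAlgebra.lift R ![(t : A), ↑t⁻¹, s, ↑t⁻¹ * s * t], by
      rintro _ _ (_ | _ | _ | _ | _ | _)
      · simp
      · simp
      · simpa using quad
      · simpa using comm.eq
      · simpa using braid
      · simp [← mul_assoc]⟩

variable {t : Aˣ} {s : A} (quad : (s + 1) * (s - algebraMap R A q) = 0)
  (comm : Commute ((t : A) ^ 3) s)
  (braid : s * (↑t⁻¹ * s * t) * s = ↑t⁻¹ * s * t * s * (↑t⁻¹ * s * t))

@[simp]
theorem lift_T : lift t s quad comm braid (T R q) = t := by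
  simp [lift, T, gen]

@[simp]
theorem lift_S1 : lift t s quad comm braid (S1 R q) = s := by
  simp [lift, S1, gen]

end HeckeAlg

theorem forall_fin_of_add_one {n : ℕ} [NeZero n] {P : Fin n → Prop} {j : Fin n} (base : P j)
    (step : ∀ i, P i → P (i + 1)) (i : Fin n) : P i := by
  have shifted (m : ℕ) : P (j + Fin.ofNat n m) := by
    induction m with
    | zero => simpa using base
    | succ m ih =>
      have : Fin.ofNat n (m + 1) = Fin.ofNat n m + 1 := by
        simp [Fin.ext_iff, Fin.val_add]
      rw [this, ← add_assoc]
      exact step _ ih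
  simpa using shifted (i - j).val

theorem braid_of_commute_of_mul_self_eq_neg {A : Type*} [Ring A] {s r : A} (comm : Commute s r)
    (hs : s * s = -s) (hr : r * r = -r) : s * r * s = r * s * r :=
  calc
    s * r * s = s * s * r := by rw [mul_assoc, ← comm.eq, mul_assoc]
    _ = -(s * r) := by rw [hs, neg_mul]
    _ = s * (r * r) := by rw [hr, mul_neg]
    _ = r * s * r := by rw [← mul_assoc, comm.eq]

theorem lmul_mul_self_eq_neg {ι R : Type*} [CommRing R] {d : ι → R}
    (hd : ∀ i, d i = 0 ∨ d i = -1) :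
    Algebra.lmul R (ι → R) d * Algebra.lmul R (ι → R) d = -Algebra.lmul R (ι → R) d := by
  have mul_self : d * d = -d := funext fun i ↦ by rcases hd i with h | h <;> simp [h]
  rw [← map_mul, mul_self, map_neg]

theorem single_apply_mem_of_mul_mem {ι k : Type*} [DecidableEq ι] [DivisionRing k]
    {d : ι → k} {U : Submodule k (ι → k)} (hd : ∀ x ∈ U, d * x ∈ U) {j : ι} {c : k}
    (hj : d j ≠ c) (hc : ∀ i ≠ j, d i = c) {x : ι → k} (hx : x ∈ U) : Pi.single j (x j) ∈ U := by
  have mem : d * x - c • x ∈ U := U.sub_mem (hd x hx) (U.smul_mem c hx)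
  have : Pi.single j (x j) = (d j - c)⁻¹ • (d * x - c • x) := by
    ext i
    obtain rfl | hij := eq_or_ne i j
    · simp [← sub_mul, sub_ne_zero.2 hj]
    · simp [hij, hc i hij]
  exact this ▸ U.smul_mem _ mem

section Cyclic

variable {k : Type} [Field k]

theorem Tmat3_apply (z : k) (x : Fin 3 → k) : Tmat3 k z x = ![z * x 2, x 0, x 1] := by
  ext i
  fin_cases i <;> simp [Tmat3, Matrix.mulVec, dotProduct, Fin.sum_univ_three]

theorem Tmat3_apply_add_one (z : k) (x : Fin 3 → k) (i : Fin 3) :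
    Tmat3 k z x (i + 1) = ![1, 1, z] i * x i := by
  fin_cases i <;> simp [Tmat3_apply]

theorem Tmat3_single (z a : k) (i : Fin 3) :
    Tmat3 k z (Pi.single i a) = Pi.single (i + 1) (![1, 1, z] i * a) := by
  ext j
  fin_cases i <;> fin_cases j <;> simp [Tmat3_apply]

theorem Tmat3_pow_three (z : k) : Tmat3 k z ^ 3 = algebraMap k _ z := by
  refine LinearMap.ext fun x ↦ funext fun i ↦ ?_
  fin_cases i <;> simp [pow_succ, Tmat3_apply]

theorem Tmat3_mul_lmul (z : k) (d : Fin 3 → k) :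
    Tmat3 k z * Algebra.lmul k (Fin 3 → k) (fun i ↦ d (i + 1)) =
      Algebra.lmul k (Fin 3 → k) d * Tmat3 k z := by
  refine LinearMap.ext fun x ↦ funext fun i ↦ ?_
  fin_cases i <;> simp [Tmat3_apply, mul_left_comm]

theorem SP3_eq_lmul : SP3 k = Algebra.lmul k (Fin 3 → k) ![0, 0, -1] := by
  refine LinearMap.ext fun x ↦ funext fun i ↦ ?_
  fin_cases i <;> simp [SP3, Matrix.mulVec, dotProduct, Fin.sum_univ_three]

theorem SPt3_eq_lmul : SPt3 k = Algebra.lmul k (Fin 3 → k) ![-1, 0, -1] := by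
  refine LinearMap.ext fun x ↦ funext fun i ↦ ?_
  fin_cases i <;> simp [SPt3, Matrix.mulVec, dotProduct, Fin.sum_univ_three]

/-- The operator `Tmat3 k z`, as a unit of the endomorphism ring. -/
noncomputable def Tmat3Unit (z : kˣ) : (Module.End k (Fin 3 → k))ˣ :=
  Units.ofPow (Units.map (algebraMap k (Module.End k (Fin 3 → k))).toMonoidHom z) (Tmat3 k z)
    three_ne_zero (Tmat3_pow_three (z : k))

@[simp]
theorem coe_Tmat3Unit (z : kˣ) : (Tmat3Unit z : Module.End k (Fin 3 → k)) = Tmat3 k z := rfl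

theorem Tmat3Unit_inv_mul_lmul_mul (z : kˣ) (d : Fin 3 → k) :
    ↑(Tmat3Unit z)⁻¹ * Algebra.lmul k (Fin 3 → k) d * Tmat3Unit z =
      Algebra.lmul k (Fin 3 → k) (fun i ↦ d (i + 1)) := by
  rw [mul_assoc, Units.inv_mul_eq_iff_eq_mul, coe_Tmat3Unit, Tmat3_mul_lmul]

/-- The `H_k`-module `k³` on which `T` acts by `Tmat3 k z` and `S_1` diagonally with entries
`d i ∈ {0, -1}`. The diagonal is encoded as multiplication by `d` in the algebra `Fin 3 → k`. -/
noncomputable def diagonalRep (z : kˣ) {d : Fin 3 → k} (hd : ∀ i, d i = 0 ∨ d i = -1) :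
    Hk k →ₐ[k] Module.End k (Fin 3 → k) :=
  HeckeAlg.lift (Tmat3Unit z) (Algebra.lmul k (Fin 3 → k) d)
    (by rw [map_zero, sub_zero, add_mul, one_mul, lmul_mul_self_eq_neg hd, neg_add_cancel])
    (by
      rw [coe_Tmat3Unit, Tmat3_pow_three]
      exact Algebra.commutes _ _)
    (by
      rw [Tmat3Unit_inv_mul_lmul_mul]
      exact braid_of_commute_of_mul_self_eq_neg ((Commute.all _ _).map (Algebra.lmul _ _))
        (lmul_mul_self_eq_neg hd) (lmul_mul_self_eq_neg fun i ↦ hd (i + 1)))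

@[simp]
theorem diagonalRep_T (z : kˣ) {d : Fin 3 → k} (hd : ∀ i, d i = 0 ∨ d i = -1) :
    diagonalRep z hd (HeckeAlg.T k 0) = Tmat3 k z :=
  HeckeAlg.lift_T ..

@[simp]
theorem diagonalRep_S1 (z : kˣ) {d : Fin 3 → k} (hd : ∀ i, d i = 0 ∨ d i = -1) :
    diagonalRep z hd (HeckeAlg.S1 k 0) = Algebra.lmul k (Fin 3 → k) d :=
  HeckeAlg.lift_S1 ..

variable {z : kˣ} {W : Submodule k (Fin 3 → k)}

theorem eq_top_of_Tmat3_mem_of_single_mem (hT : ∀ x ∈ W, Tmat3 k z x ∈ W) {j : Fin 3}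
    (hj : Pi.single j 1 ∈ W) : W = ⊤ := by
  have single_mem (i : Fin 3) : Pi.single i (1 : k) ∈ W := by
    refine forall_fin_of_add_one (P := fun i ↦ Pi.single i (1 : k) ∈ W) hj (fun i hi ↦ ?_) i
    have weight_ne_zero : ![1, 1, (z : k)] i ≠ 0 := by fin_cases i <;> simp
    have := W.smul_mem (![1, 1, (z : k)] i)⁻¹ (hT _ hi)
    simpa [Tmat3_single, ← Pi.single_smul, weight_ne_zero] using this
  rw [eq_top_iff, ← (Pi.basisFun k (Fin 3)).span_eq, Submodule.span_le]
  rintro _ ⟨i, rfl⟩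
  simpa using single_mem i

theorem eq_bot_of_Tmat3_mem_of_apply_eq_zero (hT : ∀ x ∈ W, Tmat3 k z x ∈ W) {j : Fin 3}
    (hj : ∀ x ∈ W, x j = 0) : W = ⊥ := by
  have apply_eq_zero (i : Fin 3) : ∀ x ∈ W, x i = 0 := by
    refine forall_fin_of_add_one (P := fun i ↦ ∀ x ∈ W, x i = 0) hj (fun i hi x hx ↦ ?_) i
    have : (Tmat3 k z ^ 3) x (i + 1) = 0 := by
      rw [pow_succ', Module.End.mul_apply, Tmat3_apply_add_one, pow_two, Module.End.mul_apply,
        hi _ (hT _ (hT x hx)), mul_zero]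
    simpa [Tmat3_pow_three] using this
  exact (Submodule.eq_bot_iff W).2 fun x hx ↦ funext fun i ↦ apply_eq_zero i x hx

theorem eq_bot_or_eq_top_of_Tmat3_mem_of_single_apply_mem (hT : ∀ x ∈ W, Tmat3 k z x ∈ W)
    {j : Fin 3} (hj : ∀ x ∈ W, Pi.single j (x j) ∈ W) : W = ⊥ ∨ W = ⊤ := by
  by_cases h : ∀ x ∈ W, x j = 0
  · exact .inl (eq_bot_of_Tmat3_mem_of_apply_eq_zero hT h)
  · push Not at h
    obtain ⟨x, hx, hxj⟩ := h
    refine .inr (eq_top_of_Tmat3_mem_of_single_mem hT (j := j) ?_)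
    simpa [← Pi.single_smul, hxj] using W.smul_mem (x j)⁻¹ (hj x hx)

theorem eq_bot_or_eq_top_of_diagonalRep_mem {d : Fin 3 → k} (hd : ∀ i, d i = 0 ∨ d i = -1)
    {j : Fin 3} {c : k} (hj : d j ≠ c) (hc : ∀ i ≠ j, d i = c)
    (hW : ∀ a, ∀ x ∈ W, diagonalRep z hd a x ∈ W) : W = ⊥ ∨ W = ⊤ :=
  eq_bot_or_eq_top_of_Tmat3_mem_of_single_apply_mem
    (fun x hx ↦ by simpa using hW (HeckeAlg.T k 0) x hx)
    (fun x hx ↦ single_apply_mem_of_mul_mem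
      (fun y hy ↦ by simpa using hW (HeckeAlg.S1 k 0) y hy) hj hc hx)

end Cyclic

theorem statement17_general (k : Type) [Field k] (z : kˣ) :
    (∃ ρ : Hk k →ₐ[k] Module.End k (Fin 3 → k),
      ρ (HeckeAlg.T k 0) = Tmat3 k z ∧ ρ (HeckeAlg.S1 k 0) = SP3 k ∧
      (∀ W : Submodule k (Fin 3 → k), (∀ a : Hk k, ∀ x ∈ W, ρ a x ∈ W) → W = ⊥ ∨ W = ⊤)) ∧
    (∃ ρ : Hk k →ₐ[k] Module.End k (Fin 3 → k),
      ρ (HeckeAlg.T k 0) = Tmat3 k z ∧ ρ (HeckeAlg.S1 k 0) = SPt3 k ∧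
      (∀ W : Submodule k (Fin 3 → k), (∀ a : Hk k, ∀ x ∈ W, ρ a x ∈ W) → W = ⊥ ∨ W = ⊤)) := by
  have hP (i : Fin 3) : ![0, 0, -1] i = (0 : k) ∨ ![0, 0, -1] i = (-1 : k) := by
    fin_cases i <;> simp
  have hPt (i : Fin 3) : ![-1, 0, -1] i = (0 : k) ∨ ![-1, 0, -1] i = (-1 : k) := by
    fin_cases i <;> simp
  refine ⟨⟨diagonalRep z hP, diagonalRep_T .., ?_, fun W hW ↦ ?_⟩,
    ⟨diagonalRep z hPt, diagonalRep_T .., ?_, fun W hW ↦ ?_⟩⟩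
  · rw [diagonalRep_S1, SP3_eq_lmul]
  · refine eq_bot_or_eq_top_of_diagonalRep_mem hP (j := 2) (c := 0) (by simp) (fun i hi ↦ ?_) hW
    fin_cases i <;> simp_all
  · rw [diagonalRep_S1, SPt3_eq_lmul]
  · refine eq_bot_or_eq_top_of_diagonalRep_mem hPt (j := 1) (c := -1) (by simp) (fun i hi ↦ ?_) hW
    fin_cases i <;> simp_all

/-- For every `z ∈ k^×`, the formulas defining `P_3(z)` and `P̃_3(z)` endow
the respective `3`-dimensional `k`-vector spaces with `H_k`-module structures, and both
`H_k`-modules `P_3(z)` and `P̃_3(z)` are simple. -/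
theorem statement17 (p : ℕ) [Fact p.Prime] (k : Type) [Field k] [IsAlgClosed k] [CharP k p]
    (z : kˣ) :
    (∃ ρ : Hk k →ₐ[k] Module.End k (Fin 3 → k),
      ρ (HeckeAlg.T k 0) = Tmat3 k z ∧ ρ (HeckeAlg.S1 k 0) = SP3 k ∧
      (∀ W : Submodule k (Fin 3 → k), (∀ a : Hk k, ∀ x ∈ W, ρ a x ∈ W) → W = ⊥ ∨ W = ⊤)) ∧
    (∃ ρ : Hk k →ₐ[k] Module.End k (Fin 3 → k),
      ρ (HeckeAlg.T k 0) = Tmat3 k z ∧ ρ (HeckeAlg.S1 k 0) = SPt3 k ∧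
      (∀ W : Submodule k (Fin 3 → k), (∀ a : Hk k, ∀ x ∈ W, ρ a x ∈ W) → W = ⊥ ∨ W = ⊤)) :=
  statement17_general k z
end

section
/- Every simple H_k-module on which the center of H_k acts by scalars is isomorphic to one of the following: M_1(0,y) or M_1(-1,y) with y ∈ k^×; M_2(y) or M̃_2(y) with y ∈ k^×; K_6(z,y,y') with z, y, y' ∈ k^×, y^2 ≠ y' and y'^2 ≠ zy; M_3(z,y), M̃_3(z,y), N_3(z,y) or Ñ_3(z,y) with z, y ∈ k^× and y^3 ≠ z; L_6(z,y) or L̃_6(z,y) with z, y ∈ k^×; P_3(z) or P̃_3(z) with z ∈ k^×. -/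
noncomputable section

variable (p : ℕ) [Fact p.Prime] (k : Type) [Field k] [IsAlgClosed k] [CharP k p]

/-- The `H_k`-module given by `(V, ρ)` is isomorphic to the `H_k`-module structure on `k^n`
on which `T` acts by `Tm` and `S_1` acts by `Sm` (a `k`-linear isomorphism intertwining the
actions of the generators `T` and `S_1` of `H_k` is exactly an isomorphism of
`H_k`-modules). -/
def IsoTo (V : Type) [AddCommGroup V] [Module k V]
    (ρ : Hk k →ₐ[k] Module.End k V) (n : ℕ) (Tm Sm : Module.End k (Fin n → k)) : Prop :=
  ∃ g : V ≃ₗ[k] (Fin n → k),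
    (∀ x : V, g (ρ (HeckeAlg.T k 0) x) = Tm (g x)) ∧
    (∀ x : V, g (ρ (HeckeAlg.S1 k 0) x) = Sm (g x))

end

/-!
On a simple module with central character the central elements `T³`, `T (1 + S₁ + S₂ + S₀ + S₁S₂ +
S₂S₀ + S₀S₁)` and its mirror image with `T⁻¹` act by scalars `z ≠ 0`, `c₁`, `c₂`, where
`S₀ = T S₁ T⁻¹`; since `T⁻¹ = z⁻¹ T²`, a subspace stable under `T` and `S₁` is `0` or everything.

If `S₀` and `S₁` have no common `(-1)`-eigenvector and `S₁ ≠ 0`, the braid relations force most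
products in the central elements to vanish on the image of `S₁`. A vector `x` remains with `S₁`
mapping its `T`-orbit into the line `k x`. Its `T`-orbit spans the module, which therefore has
dimension at most three and can be read off from the scalars giving `S₁` on the orbit.

If `w` is a common `(-1)`-eigenvector, put `u = T⁻¹ S₂ w`. The central elements determine `S₁` on
the `T`-orbits of `w` and `u`, in terms of `c = c₂` and `m = c₁ / z`. Unless `m = c²` or `c = m² z`
these six vectors are independent, giving `K_6`, `L_6` or `L̃_6`. If `m = c²`, a combination of them
is a vector `x` as above for `S₁`, except when `u = -c w`; then there is one for `-1 - S₁`, or the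
module is one-dimensional. If `c = m² z` the same holds with `u = -m T w`.
-/

section CyclicSum

variable {A : Type*} [Ring A] {a b c t : A}

/-- The sum `1 + a + b + c + ab + bc + ca`. For the three Hecke generators permuted cyclically by
`T` it differs by a power of `T` from a central element of `H_k`. -/
def cyclicSum (a b c : A) : A :=
  1 + a + b + c + a * b + b * c + c * a

theorem cyclicSum_rotate (a b c : A) : cyclicSum c a b = cyclicSum a b c := by
  unfold cyclicSum
  abel

theorem semiconjBy_cyclicSum_of_braid (ha : a * a = -a) (hb : b * b = -b)
    (hab : a * b * a = b * a * b) : SemiconjBy (cyclicSum a b c) a b := by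
  have left : cyclicSum a b c * a = b * a + b * a * b + b * c * a := by
    simp only [cyclicSum, add_mul, one_mul, ha, hab, mul_assoc c, mul_neg]
    abel
  have right : b * cyclicSum a b c = b * a + b * a * b + b * c * a := by
    simp only [cyclicSum, mul_add, mul_one, ← mul_assoc, hb, neg_mul]
    abel
  exact left.trans right.symm

theorem semiconjBy_cyclicSum {a' b' c' : A} (ha : SemiconjBy t a a') (hb : SemiconjBy t b b')
    (hc : SemiconjBy t c c') : SemiconjBy t (cyclicSum a b c) (cyclicSum a' b' c') :=
  ((((((SemiconjBy.one_right t).add_right ha).add_right hb).add_right hc).add_right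
    (ha.mul_right hb)).add_right (hb.mul_right hc)).add_right (hc.mul_right ha)

theorem commute_mul_cyclicSum_left (hba : SemiconjBy t b a) (hac : SemiconjBy t a c)
    (hcb : SemiconjBy t c b) : Commute t (t * cyclicSum a b c) := by
  have h : SemiconjBy t (cyclicSum a b c) (cyclicSum a b c) := by
    simpa only [cyclicSum_rotate] using semiconjBy_cyclicSum hac hba hcb
  exact (Commute.refl t).mul_right h

theorem commute_mul_cyclicSum_right (ha : a * a = -a) (hb : b * b = -b)
    (hab : a * b * a = b * a * b) (hba : SemiconjBy t b a) : Commute a (t * cyclicSum a b c) :=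
  (hba.mul_left (semiconjBy_cyclicSum_of_braid ha hb hab)).symm

theorem quadratic_of_semiconjBy (ht : IsUnit t) (h : SemiconjBy t a b) (ha : a * a = -a) :
    b * b = -b := by
  have h₂ := h.mul_right h
  rw [ha] at h₂
  exact ht.mul_right_cancel (h₂.eq.symm.trans h.neg_right.eq)

theorem braid_of_semiconjBy {a' b' : A} (ht : IsUnit t) (ha : SemiconjBy t a a')
    (hb : SemiconjBy t b b') (hab : a * b * a = b * a * b) :
    a' * b' * a' = b' * a' * b' := by
  have h := (ha.mul_right hb).mul_right ha
  rw [hab] at h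
  exact ht.mul_right_cancel (h.eq.symm.trans ((hb.mul_right ha).mul_right hb).eq)

end CyclicSum

namespace HeckeAlg

section Parameter

variable (R : Type) [CommRing R] (q : R)

/-- The third affine generator `S₀ = T S₁ T⁻¹`; conjugation by `T` permutes `S₂ ↦ S₁ ↦ S₀ ↦ S₂`. -/
noncomputable def S0 : HeckeAlg R q := T R q * S1 R q * Tinv R q

/-- `T` as a unit of the affine Hecke algebra. -/
noncomputable def Tunit : (HeckeAlg R q)ˣ := ⟨T R q, Tinv R q, T_mul_Tinv R q, Tinv_mul_T R q⟩

theorem isUnit_T : IsUnit (T R q) := (Tunit R q).isUnit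

theorem semiconjBy_T_S2 : SemiconjBy (T R q) (S2 R q) (S1 R q) := T_mul_S2 R q

theorem semiconjBy_T_S1 : SemiconjBy (T R q) (S1 R q) (S0 R q) := by
  rw [SemiconjBy, S0, mul_assoc _ (Tinv R q), Tinv_mul_T, mul_one]

theorem semiconjBy_T_S0 : SemiconjBy (T R q) (S0 R q) (S2 R q) := by
  have h : T R q * (T R q * S0 R q) = T R q * (S2 R q * T R q) := by
    calc T R q * (T R q * S0 R q)
        = T R q ^ 3 * S1 R q * Tinv R q := by simp only [S0, pow_three, mul_assoc]
      _ = S1 R q * T R q * T R q := by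
        rw [T3_mul_S1, pow_three', mul_assoc, mul_assoc _ (T R q) (Tinv R q), T_mul_Tinv, mul_one,
          ← mul_assoc]
      _ = T R q * (S2 R q * T R q) := by rw [← T_mul_S2, mul_assoc]
  exact (isUnit_T R q).mul_left_cancel h

theorem semiconjBy_Tinv {a b : HeckeAlg R q} (h : SemiconjBy (T R q) a b) :
    SemiconjBy (Tinv R q) b a :=
  SemiconjBy.units_inv_symm_left (a := Tunit R q) h

theorem S1_mul_S0_mul_S1 : S1 R q * S0 R q * S1 R q = S0 R q * S1 R q * S0 R q :=
  braid_of_semiconjBy (isUnit_T R q) (semiconjBy_T_S2 R q) (semiconjBy_T_S1 R q)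
    (braid_rel R q).symm

theorem adjoin_T_Tinv_S1 :
    Algebra.adjoin R {T R q, Tinv R q, S1 R q} = (⊤ : Subalgebra R (HeckeAlg R q)) := by
  set B := Algebra.adjoin R {T R q, Tinv R q, S1 R q}
  have hT : T R q ∈ B := Algebra.subset_adjoin (by simp)
  have hTinv : Tinv R q ∈ B := Algebra.subset_adjoin (by simp)
  have hS1 : S1 R q ∈ B := Algebra.subset_adjoin (by simp)
  have hS2 : S2 R q ∈ B := by
    have : S2 R q = Tinv R q * (S1 R q * T R q) := by
      rw [← T_mul_S2, ← mul_assoc, Tinv_mul_T, one_mul]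
    exact this ▸ B.mul_mem hTinv (B.mul_mem hS1 hT)
  have hgen : ∀ i, gen R q i ∈ B := by
    intro i
    fin_cases i
    exacts [hT, hTinv, hS1, hS2]
  have hπ := (AlgHom.range_eq_top _).2 (RingQuot.mkAlgHom_surjective R (HeckeRel R q))
  rw [← top_le_iff, ← hπ, ← Algebra.map_top, ← FreeAlgebra.adjoin_range_ι, AlgHom.map_adjoin,
    Algebra.adjoin_le_iff]
  rintro _ ⟨_, ⟨i, rfl⟩, rfl⟩
  exact hgen i

variable {R q}

theorem mem_center_of_commute {x : HeckeAlg R q} (hT : Commute (T R q) x)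
    (hS1 : Commute (S1 R q) x) : x ∈ Subring.center (HeckeAlg R q) := by
  have hTinv : Commute (Tinv R q) x := semiconjBy_Tinv R q hT
  have hle : Algebra.adjoin R {T R q, Tinv R q, S1 R q} ≤ Subalgebra.centralizer R {x} := by
    rw [Algebra.adjoin_le_iff]
    rintro _ (rfl | rfl | rfl) y rfl
    exacts [hT.symm, hTinv.symm, hS1.symm]
  rw [adjoin_T_Tinv_S1] at hle
  rw [Subring.mem_center_iff]
  intro g
  exact ((Subalgebra.mem_centralizer_iff R).1 (hle Algebra.mem_top) x rfl).symm

variable (R q)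

theorem T_pow_three_mem_center : T R q ^ 3 ∈ Subring.center (HeckeAlg R q) :=
  mem_center_of_commute ((Commute.refl _).pow_right 3) (Commute.symm (T3_mul_S1 R q))

end Parameter

section ParameterZero

variable (R : Type) [CommRing R]

theorem S1_mul_S1 : S1 R 0 * S1 R 0 = -S1 R 0 := by
  have h := quad_rel R 0
  rw [map_zero, sub_zero, add_mul, one_mul] at h
  exact eq_neg_of_add_eq_zero_left h

theorem S0_mul_S0 : S0 R 0 * S0 R 0 = -S0 R 0 :=
  quadratic_of_semiconjBy (isUnit_T R 0) (semiconjBy_T_S1 R 0) (S1_mul_S1 R)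

theorem S2_mul_S2 : S2 R 0 * S2 R 0 = -S2 R 0 :=
  quadratic_of_semiconjBy (isUnit_T R 0) (semiconjBy_T_S0 R 0) (S0_mul_S0 R)

theorem T_mul_cyclicSum_mem_center :
    T R 0 * cyclicSum (S1 R 0) (S2 R 0) (S0 R 0) ∈ Subring.center (HeckeAlg R 0) :=
  mem_center_of_commute
    (commute_mul_cyclicSum_left (semiconjBy_T_S2 R 0) (semiconjBy_T_S1 R 0) (semiconjBy_T_S0 R 0))
    (commute_mul_cyclicSum_right (S1_mul_S1 R) (S2_mul_S2 R) (braid_rel R 0)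
      (semiconjBy_T_S2 R 0))

theorem Tinv_mul_cyclicSum_mem_center :
    Tinv R 0 * cyclicSum (S1 R 0) (S0 R 0) (S2 R 0) ∈ Subring.center (HeckeAlg R 0) := by
  have hcomm := commute_mul_cyclicSum_left (semiconjBy_Tinv R 0 (semiconjBy_T_S1 R 0))
    (semiconjBy_Tinv R 0 (semiconjBy_T_S2 R 0)) (semiconjBy_Tinv R 0 (semiconjBy_T_S0 R 0))
  exact mem_center_of_commute
    ((Commute.units_inv_left_iff (u := Tunit R 0)).1 hcomm)
    (commute_mul_cyclicSum_right (S1_mul_S1 R) (S0_mul_S0 R) (S1_mul_S0_mul_S1 R 0)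
      (semiconjBy_Tinv R 0 (semiconjBy_T_S1 R 0)))

end ParameterZero

end HeckeAlg

section SimplePair

variable {k : Type} [Field k] {V : Type*} [AddCommGroup V] [Module k V]

/-- The pair of endomorphisms `(t, s)` of `V` is isomorphic to the pair `(Tm, Sm)` on `k^n`. With
`t`, `s` the actions of `T` and `S₁` this is `IsoTo`. -/
def IsoPair (t s : Module.End k V) (n : ℕ) (Tm Sm : Module.End k (Fin n → k)) : Prop :=
  ∃ g : V ≃ₗ[k] (Fin n → k), (∀ x, g (t x) = Tm (g x)) ∧ (∀ x, g (s x) = Sm (g x))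

/-- A simple module over the free algebra on `t` and `s` on which `t³` is a nonzero scalar `z`;
since `t⁻¹ = z⁻¹ t²`, stability under `t` and `s` is all that simplicity has to test. -/
structure IsSimplePair (t s : Module.End k V) (z : k) : Prop where
  ne_zero : z ≠ 0
  cube : ∀ x, t (t (t x)) = z • x
  eq_bot_or_eq_top : ∀ W : Submodule k V, (∀ x ∈ W, t x ∈ W) → (∀ x ∈ W, s x ∈ W) →
    W = ⊥ ∨ W = ⊤

theorem mem_span_range_of_represents {ι : Type*} [Fintype ι] [DecidableEq ι] {b : ι → V}
    {f : Module.End k V} {M : Matrix ι ι k} (hM : M.Represents b f) {x : V}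
    (hx : x ∈ Submodule.span k (Set.range b)) : f x ∈ Submodule.span k (Set.range b) := by
  rw [← Fintype.range_linearCombination] at hx ⊢
  obtain ⟨c, rfl⟩ := hx
  exact ⟨M.mulVec c, hM.congr_fun c⟩

theorem equivFun_apply_of_represents {ι : Type*} [Fintype ι] [DecidableEq ι]
    (B : Module.Basis ι k V) {f : Module.End k V} {M : Matrix ι ι k} (hM : M.Represents B f)
    (x : V) : B.equivFun (f x) = M.mulVecLin (B.equivFun x) := by
  have hsymm : ∀ c, B.equivFun.symm c = Fintype.linearCombination k B c := fun c => by
    rw [B.equivFun_symm_apply, Fintype.linearCombination_apply]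
  rw [← LinearEquiv.eq_symm_apply, hsymm, Matrix.mulVecLin_apply, hM.congr_fun, ← hsymm,
    LinearEquiv.symm_apply_apply]

theorem eq_neg_sub_compl (s : Module.End k V) (x : V) : s x = -x - (-1 - s) x := by
  simp only [LinearMap.sub_apply, LinearMap.neg_apply, Module.End.one_apply]
  abel

namespace IsSimplePair

variable {t s : Module.End k V} {z : k}

theorem compl (h : IsSimplePair t s z) : IsSimplePair t (-1 - s) z where
  ne_zero := h.ne_zero
  cube := h.cube
  eq_bot_or_eq_top W hWt hWs := by
    refine h.eq_bot_or_eq_top W hWt fun x hx => ?_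
    rw [eq_neg_sub_compl s x]
    exact W.sub_mem (W.neg_mem hx) (hWs x hx)

theorem injective (h : IsSimplePair t s z) : Function.Injective t := by
  intro x y hxy
  have hz : z • x = z • y := by rw [← h.cube x, ← h.cube y, hxy]
  exact smul_right_injective V h.ne_zero hz

theorem apply_ne_zero (h : IsSimplePair t s z) {x : V} (hx : x ≠ 0) : t x ≠ 0 :=
  (map_ne_zero_iff t h.injective).2 hx

theorem apply_cyclic_combination (h : IsSimplePair t s z) (α β γ : k) (x : V) :
    t (α • x + β • t x + γ • t (t x)) = (γ * z) • x + α • t x + β • t (t x) := by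
  simp only [map_add, map_smul, h.cube]
  module

section Represents

variable {n : ℕ} {b : Fin n → V} {M N : Matrix (Fin n) (Fin n) k}

theorem top_le_span (h : IsSimplePair t s z) (hM : M.Represents b t) (hN : N.Represents b s)
    {i : Fin n} (hi : b i ≠ 0) : ⊤ ≤ Submodule.span k (Set.range b) := by
  refine ((h.eq_bot_or_eq_top _ (fun x => mem_span_range_of_represents hM)
    (fun x => mem_span_range_of_represents hN)).resolve_left fun hbot => hi ?_).ge
  rw [← Submodule.mem_bot k, ← hbot]
  exact Submodule.subset_span ⟨i, rfl⟩

theorem finrank_eq (h : IsSimplePair t s z) (hM : M.Represents b t) (hN : N.Represents b s)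
    (hb : LinearIndependent k b) (i : Fin n) : Module.finrank k V = n := by
  have B := Module.Basis.mk hb (h.top_le_span hM hN (hb.ne_zero i))
  rw [Module.finrank_eq_card_basis B, Fintype.card_fin]

theorem isoPair_of_finrank_eq (h : IsSimplePair t s z) (hM : M.Represents b t)
    (hN : N.Represents b s) (hn : Module.finrank k V = n) {i : Fin n} (hi : b i ≠ 0) :
    IsoPair t s n M.mulVecLin N.mulVecLin := by
  have hspan := h.top_le_span hM hN hi
  have hb : LinearIndependent k b :=
    linearIndependent_of_top_le_span_of_card_eq_finrank hspan (by rw [Fintype.card_fin, hn])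
  have hB : ⇑(Module.Basis.mk hb hspan) = b := Module.Basis.coe_mk hb hspan
  exact ⟨(Module.Basis.mk hb hspan).equivFun,
    equivFun_apply_of_represents _ (hB.symm ▸ hM), equivFun_apply_of_represents _ (hB.symm ▸ hN)⟩

theorem isoPair_of_linearIndependent (h : IsSimplePair t s z) (hM : M.Represents b t)
    (hN : N.Represents b s) (hb : LinearIndependent k b) (i : Fin n) :
    IsoPair t s n M.mulVecLin N.mulVecLin :=
  h.isoPair_of_finrank_eq hM hN (h.finrank_eq hM hN hb i) (hb.ne_zero i)

end Represents

theorem eq_smul_of_eigenvector (h : IsSimplePair t s z) {f : V} (hf : f ≠ 0) {y e : k}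
    (ht : t f = y • f) (hs : s f = e • f) (x : V) : ∃ c : k, c • f = x := by
  have htop := h.top_le_span (b := ![f]) (M := !![y]) (N := !![e]) (i := 0)
    (by simpa [Matrix.represents_iff'] using ht.symm)
    (by simpa [Matrix.represents_iff'] using hs.symm) hf
  simpa [Submodule.mem_span_singleton] using htop (Submodule.mem_top (x := x))

theorem isoPair_one (h : IsSimplePair t s z) {x : V} (hx : x ≠ 0) {y e : k} (ht : t x = y • x)
    (hs : s x = e • x) : ∃ y : kˣ, IsoPair t s 1 (Tmat1 k y) (Tmat1 k e) := by
  have hy : y ≠ 0 := by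
    rintro rfl
    exact h.apply_ne_zero hx (by rw [ht, zero_smul])
  refine ⟨Units.mk0 y hy, h.isoPair_of_linearIndependent (b := ![x]) ?_ ?_
    (linearIndependent_unique_iff.2 hx) 0⟩
  · simpa [Matrix.represents_iff'] using ht.symm
  · simpa [Matrix.represents_iff'] using hs.symm

theorem isoPair_two (h : IsSimplePair t s z) {w : V} (hw : w ≠ 0) {y e e' : k} (hne : e ≠ e')
    (htt : t (t w) = (-y ^ 2) • w + (-y) • t w) (hs : s w = e • w) (hst : s (t w) = e' • t w) :
    IsoPair t s 2 (Tmat2 k y) (Matrix.mulVecLin !![e, 0; 0, e']) := by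
  refine h.isoPair_of_linearIndependent (b := ![w, t w]) ?_ ?_ ?_ 0
  · simp [Matrix.represents_iff', htt]
  · simp [Matrix.represents_iff', hs, hst]
  · rw [LinearIndependent.pair_iff' hw]
    intro c hc
    have hcw : c ≠ 0 := by
      rintro rfl
      exact h.apply_ne_zero hw (by rw [← hc, zero_smul])
    rw [← hc, map_smul, hs, smul_smul, smul_smul] at hst
    exact hne (mul_left_cancel₀ hcw (smul_left_injective k hw (by rwa [mul_comm e'] at hst)))

theorem represents_cyclic_three (h : IsSimplePair t s z) (v : V) :
    (!![0, 0, z; 1, 0, 0; 0, 1, 0] : Matrix (Fin 3) (Fin 3) k).Represents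
      ![v, t v, t (t v)] t := by
  simp [Matrix.represents_iff', Fin.forall_fin_succ, Fin.sum_univ_three, h.cube]

theorem isoPair_three (h : IsSimplePair t s z) (hn : Module.finrank k V = 3) {v : V} (hv : v ≠ 0)
    {a₀₀ a₀₁ a₀₂ a₁₀ a₁₁ a₁₂ a₂₀ a₂₁ a₂₂ : k}
    (h₀ : s v = a₀₀ • v + a₁₀ • t v + a₂₀ • t (t v))
    (h₁ : s (t v) = a₀₁ • v + a₁₁ • t v + a₂₁ • t (t v))
    (h₂ : s (t (t v)) = a₀₂ • v + a₁₂ • t v + a₂₂ • t (t v)) :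
    IsoPair t s 3 (Tmat3 k z)
      (Matrix.mulVecLin !![a₀₀, a₀₁, a₀₂; a₁₀, a₁₁, a₁₂; a₂₀, a₂₁, a₂₂]) := by
  refine h.isoPair_of_finrank_eq (h.represents_cyclic_three v) ?_ hn (i := 0) hv
  simp [Matrix.represents_iff', Fin.forall_fin_succ, Fin.sum_univ_three, h₀, h₁, h₂]

theorem represents_cyclic_six (h : IsSimplePair t s z) (v w : V) :
    (!![0, 0, z, 0, 0, 0; 1, 0, 0, 0, 0, 0; 0, 1, 0, 0, 0, 0;
        0, 0, 0, 0, 0, z; 0, 0, 0, 1, 0, 0; 0, 0, 0, 0, 1, 0] :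
      Matrix (Fin 6) (Fin 6) k).Represents ![v, t v, t (t v), w, t w, t (t w)] t := by
  simp [Matrix.represents_iff', Fin.forall_fin_succ, Fin.sum_univ_six, h.cube]

theorem represents_six {v w : V} {α β γ : k} (h₀ : s v = α • w) (h₁ : s (t v) = β • t (t w))
    (h₂ : s (t (t v)) = -t (t v)) (h₃ : s w = -w) (h₄ : s (t w) = γ • t (t v))
    (h₅ : s (t (t w)) = -t (t w)) :
    (!![0, 0, 0, 0, 0, 0; 0, 0, 0, 0, 0, 0; 0, 0, -1, 0, γ, 0;
        α, 0, 0, -1, 0, 0; 0, 0, 0, 0, 0, 0; 0, β, 0, 0, 0, -1] :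
      Matrix (Fin 6) (Fin 6) k).Represents ![v, t v, t (t v), w, t w, t (t w)] s := by
  simp [Matrix.represents_iff', Fin.forall_fin_succ, Fin.sum_univ_six, h₀, h₁, h₂, h₃, h₄, h₅]

theorem isoPair_six (h : IsSimplePair t s z) (hn : Module.finrank k V = 6) {v w : V} (hw : w ≠ 0)
    {α β γ : k} (h₀ : s v = α • w) (h₁ : s (t v) = β • t (t w)) (h₂ : s (t (t v)) = -t (t v))
    (h₃ : s w = -w) (h₄ : s (t w) = γ • t (t v)) (h₅ : s (t (t w)) = -t (t w)) :
    IsoPair t s 6 (Tmat6 k z) (Matrix.mulVecLin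
      !![0, 0, 0, 0, 0, 0; 0, 0, 0, 0, 0, 0; 0, 0, -1, 0, γ, 0;
         α, 0, 0, -1, 0, 0; 0, 0, 0, 0, 0, 0; 0, β, 0, 0, 0, -1]) :=
  h.isoPair_of_finrank_eq (h.represents_cyclic_six v w) (represents_six h₀ h₁ h₂ h₃ h₄ h₅) hn
    (i := 3) hw

end IsSimplePair

/-- The pair `(t, s)` is one of the modules of the classification, `t` being the action of `T` and
`s` that of `S₁`. Constructors are named after the modules, `t` standing for a tilde. -/
inductive IsListed (t s : Module.End k V) : Prop
  | M₁_zero (y : kˣ) (h : IsoPair t s 1 (Tmat1 k y) (Tmat1 k 0))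
  | M₁_neg_one (y : kˣ) (h : IsoPair t s 1 (Tmat1 k y) (Tmat1 k (-1)))
  | M₂ (y : kˣ) (h : IsoPair t s 2 (Tmat2 k y) (SM2 k))
  | Mt₂ (y : kˣ) (h : IsoPair t s 2 (Tmat2 k y) (SMt2 k))
  | K₆ (z y y' : kˣ) (hyy' : (y : k) ^ 2 ≠ y') (hzy : (y' : k) ^ 2 ≠ z * y)
      (h : IsoPair t s 6 (Tmat6 k z) (SK6 k z y y'))
  | M₃ (z y : kˣ) (hyz : (y : k) ^ 3 ≠ z) (h : IsoPair t s 3 (Tmat3 k z) (SM3 k y))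
  | Mt₃ (z y : kˣ) (hyz : (y : k) ^ 3 ≠ z) (h : IsoPair t s 3 (Tmat3 k z) (SMt3 k y))
  | N₃ (z y : kˣ) (hyz : (y : k) ^ 3 ≠ z) (h : IsoPair t s 3 (Tmat3 k z) (SN3 k y))
  | Nt₃ (z y : kˣ) (hyz : (y : k) ^ 3 ≠ z) (h : IsoPair t s 3 (Tmat3 k z) (SNt3 k y))
  | L₆ (z y : kˣ) (h : IsoPair t s 6 (Tmat6 k z) (SL6 k z y))
  | Lt₆ (z y : kˣ) (h : IsoPair t s 6 (Tmat6 k z) (SLt6 k z y))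
  | P₃ (z : kˣ) (h : IsoPair t s 3 (Tmat3 k z) (SP3 k))
  | Pt₃ (z : kˣ) (h : IsoPair t s 3 (Tmat3 k z) (SPt3 k))

/-- A nonzero vector `x` such that `s` maps the `t`-orbit of `x` into the line `k x`, acting there
by `-1`; `a` and `b` record `s` on `T²x` and `Tx`. -/
structure RankOneVector (t s : Module.End k V) (z a b : k) (x : V) : Prop where
  ne_zero : x ≠ 0
  apply_self : s x = -x
  apply_t : s (t x) = b • x
  apply_t_t : s (t (t x)) = (a * z) • x

namespace RankOneVector

variable {t s : Module.End k V} {z a b : k} {x : V}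

theorem apply_combination (hx : RankOneVector t s z a b x) (α β γ : k) :
    s (α • x + β • t x + γ • t (t x)) = (-α + β * b + γ * (a * z)) • x := by
  simp only [map_add, map_smul, hx.apply_self, hx.apply_t, hx.apply_t_t]
  module

theorem relation (hx : RankOneVector t s z a b x) {α β γ : k}
    (h : α • x + β • t x + γ • t (t x) = 0) : -α + β * b + γ * (a * z) = 0 := by
  rw [← smul_eq_zero_iff_left hx.ne_zero, ← hx.apply_combination, h, map_zero]

/-- The determinant is that of the matrix of coefficients of `s T^(i + j) x` along `x`. -/
theorem linearIndependent (h : IsSimplePair t s z) (hx : RankOneVector t s z a b x)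
    (hdet : z - 3 * (a * b * z) - b ^ 3 - a ^ 3 * z ^ 2 ≠ 0) :
    LinearIndependent k ![x, t x, t (t x)] := by
  rw [Fintype.linearIndependent_iff]
  intro c hc
  replace hc : c 0 • x + c 1 • t x + c 2 • t (t x) = 0 := by
    simpa [Fin.sum_univ_three] using hc
  have hc' : (c 2 * z) • x + c 0 • t x + c 1 • t (t x) = 0 := by
    rw [← h.apply_cyclic_combination, hc, map_zero]
  have hc'' : (c 1 * z) • x + (c 2 * z) • t x + c 0 • t (t x) = 0 := by
    rw [← h.apply_cyclic_combination, hc', map_zero]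
  have h₀ := hx.relation hc
  have h₁ := hx.relation hc'
  have h₂ := hx.relation hc''
  have cancel {u : k} (hu : (z - 3 * (a * b * z) - b ^ 3 - a ^ 3 * z ^ 2) * u = 0) : u = 0 :=
    (mul_eq_zero.1 hu).resolve_left hdet
  have hα : c 0 = 0 := cancel <| by
    linear_combination (a * b * z - z) * h₀ - (b ^ 2 + a * z) * h₁ - (b + a ^ 2 * z) * h₂
  have hβ : c 1 = 0 := cancel <| by
    linear_combination -(b ^ 2 + a * z) * h₀ - (b + a ^ 2 * z) * h₁ + (a * b - 1) * h₂
  have hγ : c 2 = 0 := by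
    rw [hα, hβ] at h₁
    exact (mul_eq_zero.1 (by linear_combination -h₁)).resolve_right h.ne_zero
  intro i
  fin_cases i
  exacts [hα, hβ, hγ]

theorem finrank_eq_three (h : IsSimplePair t s z) (hx : RankOneVector t s z a b x)
    (hdet : z - 3 * (a * b * z) - b ^ 3 - a ^ 3 * z ^ 2 ≠ 0) : Module.finrank k V = 3 := by
  refine h.finrank_eq (h.represents_cyclic_three x)
    (N := !![-1, b, a * z; 0, 0, 0; 0, 0, 0]) ?_ (hx.linearIndependent h hdet) 0
  simp [Matrix.represents_iff', Fin.forall_fin_succ, Fin.sum_univ_three, hx.apply_self,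
    hx.apply_t, hx.apply_t_t]

/-- Otherwise `t²x + y tx + y²x` is an eigenvector of `t` killed by `s`, and spans `V`. -/
theorem t_t_eq_of_degenerate (h : IsSimplePair t s z) (hx : RankOneVector t s z a b x) {y : k}
    (hyz : y ^ 3 = z) (hab : a * z + y * b = y ^ 2) :
    t (t x) = (-y ^ 2) • x + (-y) • t x := by
  by_contra hne
  set f := y ^ 2 • x + y • t x + (1 : k) • t (t x) with hf
  have hf₀ : f ≠ 0 := fun h₀ => hne (by linear_combination (norm := module) h₀)
  have htf : t f = y • f := by
    simp only [hf, map_add, map_smul, h.cube, ← hyz]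
    module
  have hsf : s f = (0 : k) • f := by
    rw [hf, hx.apply_combination, zero_smul, show -y ^ 2 + y * b + 1 * (a * z) = 0 by
      linear_combination hab, zero_smul]
  obtain ⟨c, hc⟩ := h.eq_smul_of_eigenvector hf₀ htf hsf x
  apply hx.ne_zero
  rw [← neg_eq_zero, ← hx.apply_self, ← hc, map_smul, hsf, zero_smul, smul_zero]

theorem isListed_of_b_zero (h : IsSimplePair t s z) (hx : RankOneVector t s z a 0 x) :
    IsListed t s := by
  have hz := h.ne_zero
  have hst : s (t x) = 0 := by rw [hx.apply_t, zero_smul]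
  by_cases haz : a ^ 3 * z = 1
  · have ha : a ≠ 0 := by
      rintro rfl
      simp at haz
    have htt := hx.t_t_eq_of_degenerate h (y := a⁻¹) (by field_simp; linear_combination -haz)
      (by field_simp; linear_combination haz)
    refine .M₂ (Units.mk0 a⁻¹ (inv_ne_zero ha)) (h.isoPair_two hx.ne_zero (by simp) htt ?_ ?_)
    · rw [hx.apply_self, neg_one_smul]
    · rw [hst, zero_smul]
  have hn := hx.finrank_eq_three h fun hdet => haz <| mul_right_cancel₀ hz <| by
    linear_combination -hdet
  by_cases ha : a = 0
  · refine .P₃ (Units.mk0 z hz) (h.isoPair_three hn (h.apply_ne_zero hx.ne_zero) ?_ ?_ ?_) <;>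
    · simp only [h.cube, map_smul, hst, hx.apply_t_t, hx.apply_self, ha]
      module
  · refine .M₃ (Units.mk0 z hz) (Units.mk0 a⁻¹ (inv_ne_zero ha)) (fun hyz => haz ?_)
      (h.isoPair_three hn (h.apply_ne_zero hx.ne_zero) ?_ ?_ ?_)
    · rw [← show _ = z from hyz, Units.val_mk0]
      field_simp
    all_goals
      simp only [h.cube, map_smul, hst, hx.apply_t_t, hx.apply_self, Units.val_mk0, inv_inv]
      module

theorem isListed_of_a_zero (h : IsSimplePair t s z) (hx : RankOneVector t s z 0 b x) :
    IsListed t s := by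
  have hz := h.ne_zero
  have hstt : s (t (t x)) = 0 := by rw [hx.apply_t_t, zero_mul, zero_smul]
  by_cases hbz : b ^ 3 = z
  · have hb : b ≠ 0 := by
      rintro rfl
      simp [hz.symm] at hbz
    have htt := hx.t_t_eq_of_degenerate h hbz (by ring)
    refine .Mt₂ (Units.mk0 b hb) (h.isoPair_two (w := t (t x)) (e := 0) (e' := -1)
      (h.apply_ne_zero (h.apply_ne_zero hx.ne_zero)) (by simp) ?_ ?_ ?_)
    · simpa only [map_add, map_smul, Units.val_mk0] using congrArg (fun y => t (t y)) htt
    · rw [hstt, zero_smul]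
    · rw [h.cube, map_smul, hx.apply_self]
      module
  have hdet : z - 3 * (0 * b * z) - b ^ 3 - 0 ^ 3 * z ^ 2 ≠ 0 := fun hdet => hbz <| by
    linear_combination -hdet
  have hn := hx.finrank_eq_three h hdet
  by_cases hb : b = 0
  · refine .P₃ (Units.mk0 z hz) (h.isoPair_three hn (h.apply_ne_zero hx.ne_zero) ?_ ?_ ?_) <;>
    · simp only [h.cube, map_smul, hstt, hx.apply_t, hx.apply_self, hb]
      module
  · have hv : (b * z) • x + z • t x + b ^ 2 • t (t x) ≠ 0 := fun hv => hz <| by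
      simpa using Fintype.linearIndependent_iff.1 (hx.linearIndependent h hdet)
        ![b * z, z, b ^ 2] (by simpa [Fin.sum_univ_three] using hv) 1
    refine .Nt₃ (Units.mk0 z hz) (Units.mk0 b hb) hbz (h.isoPair_three hn hv ?_ ?_ ?_) <;>
    · simp only [map_add, h.cube, map_smul, hstt, hx.apply_t, hx.apply_self, Units.val_mk0]
      module

theorem isListed_of_compl_b_zero (h : IsSimplePair t s z) (hx : RankOneVector t (-1 - s) z a 0 x) :
    IsListed t s := by
  have hz := h.ne_zero
  have hs : s x = 0 := by rw [eq_neg_sub_compl s, hx.apply_self, sub_self]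
  have hst : s (t x) = -t x := by rw [eq_neg_sub_compl s, hx.apply_t, zero_smul, sub_zero]
  have hstt : s (t (t x)) = -t (t x) - (a * z) • x := by rw [eq_neg_sub_compl s, hx.apply_t_t]
  by_cases haz : a ^ 3 * z = 1
  · have ha : a ≠ 0 := by
      rintro rfl
      simp at haz
    have htt := hx.t_t_eq_of_degenerate h.compl (y := a⁻¹) (by field_simp; linear_combination -haz)
      (by field_simp; linear_combination haz)
    refine .Mt₂ (Units.mk0 a⁻¹ (inv_ne_zero ha)) (h.isoPair_two hx.ne_zero (by simp) htt ?_ ?_)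
    · rw [hs, zero_smul]
    · rw [hst, neg_one_smul]
  have hdet : z - 3 * (a * 0 * z) - 0 ^ 3 - a ^ 3 * z ^ 2 ≠ 0 := fun hdet =>
    haz <| mul_right_cancel₀ hz <| by linear_combination -hdet
  have hn := hx.finrank_eq_three h.compl hdet
  by_cases ha : a = 0
  · refine .Pt₃ (Units.mk0 z hz)
      (h.isoPair_three hn (h.apply_ne_zero (h.apply_ne_zero hx.ne_zero)) ?_ ?_ ?_) <;>
    · simp only [h.cube, map_smul, hs, hst, hstt, ha]
      module
  · have hv : (a * z) • x + (a ^ 2 * z) • t x + (1 : k) • t (t x) ≠ 0 := fun hv =>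
      one_ne_zero (α := k) <| by
        simpa using Fintype.linearIndependent_iff.1 (hx.linearIndependent h.compl hdet)
          ![a * z, a ^ 2 * z, 1] (by simpa [Fin.sum_univ_three] using hv) 2
    refine .Mt₃ (Units.mk0 z hz) (Units.mk0 a⁻¹ (inv_ne_zero ha)) (fun hyz => haz ?_)
      (h.isoPair_three hn hv ?_ ?_ ?_)
    · rw [← show _ = z from hyz, Units.val_mk0]
      field_simp
    all_goals
      simp only [map_add, h.cube, map_smul, hs, hst, hstt, Units.val_mk0, inv_inv]
      module

theorem isListed_of_compl_a_zero (h : IsSimplePair t s z) (hx : RankOneVector t (-1 - s) z 0 b x) :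
    IsListed t s := by
  have hz := h.ne_zero
  have hs : s x = 0 := by rw [eq_neg_sub_compl s, hx.apply_self, sub_self]
  have hst : s (t x) = -t x - b • x := by rw [eq_neg_sub_compl s, hx.apply_t]
  have hstt : s (t (t x)) = -t (t x) := by
    rw [eq_neg_sub_compl s, hx.apply_t_t, zero_mul, zero_smul, sub_zero]
  have httx := h.apply_ne_zero (h.apply_ne_zero hx.ne_zero)
  by_cases hbz : b ^ 3 = z
  · have hb : b ≠ 0 := by
      rintro rfl
      simp [hz.symm] at hbz
    have htt := hx.t_t_eq_of_degenerate h.compl hbz (by ring)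
    refine .M₂ (Units.mk0 b hb) (h.isoPair_two httx (by simp) ?_ ?_ ?_)
    · simpa only [map_add, map_smul, Units.val_mk0] using congrArg (fun y => t (t y)) htt
    · rw [hstt, neg_one_smul]
    · rw [h.cube, map_smul, hs, smul_zero, zero_smul]
  have hn := hx.finrank_eq_three h.compl fun hdet => hbz <| by linear_combination -hdet
  by_cases hb : b = 0
  · refine .Pt₃ (Units.mk0 z hz) (h.isoPair_three hn httx ?_ ?_ ?_) <;>
    · simp only [h.cube, map_smul, hs, hst, hstt, hb]
      module
  · refine .N₃ (Units.mk0 z hz) (Units.mk0 b hb) hbz (h.isoPair_three hn httx ?_ ?_ ?_) <;>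
    · simp only [h.cube, map_smul, hs, hst, hstt, Units.val_mk0]
      module

end RankOneVector

/-- The operators `t`, `s`, `s₀`, `s₂` by which `T`, `S₁`, `S₀`, `S₂` act on a simple `H_k`-module
with central character, together with the scalars `z`, `c₁`, `c₂` by which the central elements
`T³`, `T (1 + S₁ + S₂ + S₀ + S₁S₂ + S₂S₀ + S₀S₁)`, `T⁻¹ (1 + S₁ + S₀ + S₂ + S₁S₀ + S₀S₂ + S₂S₁)`
act. -/
structure IsCentralHeckeAction (t s s₀ s₂ : Module.End k V) (z c₁ c₂ : k) : Prop
    extends IsSimplePair t s z where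
  s_s : ∀ x, s (s x) = -s x
  s₀_t : ∀ x, s₀ (t x) = t (s x)
  s_t : ∀ x, s (t x) = t (s₂ x)
  s₂_t : ∀ x, s₂ (t x) = t (s₀ x)
  braid_s_s₂ : ∀ x, s (s₂ (s x)) = s₂ (s (s₂ x))
  braid_s_s₀ : ∀ x, s (s₀ (s x)) = s₀ (s (s₀ x))
  central₁ : ∀ x, t (x + s x + s₂ x + s₀ x + s (s₂ x) + s₂ (s₀ x) + s₀ (s x)) = c₁ • x
  central₂ : ∀ x, x + s x + s₀ x + s₂ x + s (s₀ x) + s₀ (s₂ x) + s₂ (s x) = c₂ • t x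

section Existence

variable {V : Type} [AddCommGroup V] [Module k V]

theorem apply_mem_of_generators (ρ : Hk k →ₐ[k] Module.End k V) {W : Submodule k V}
    (hT : ∀ x ∈ W, ρ (HeckeAlg.T k 0) x ∈ W) (hTinv : ∀ x ∈ W, ρ (HeckeAlg.Tinv k 0) x ∈ W)
    (hS1 : ∀ x ∈ W, ρ (HeckeAlg.S1 k 0) x ∈ W) (a : Hk k) : ∀ x ∈ W, ρ a x ∈ W := by
  have ha : a ∈ Algebra.adjoin k {HeckeAlg.T k 0, HeckeAlg.Tinv k 0, HeckeAlg.S1 k 0} :=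
    HeckeAlg.adjoin_T_Tinv_S1 k 0 ▸ Algebra.mem_top
  induction ha using Algebra.adjoin_induction with
  | mem a ha => rcases ha with rfl | rfl | rfl <;> assumption
  | algebraMap c =>
    intro x hx
    rw [AlgHom.commutes, Module.algebraMap_end_apply]
    exact W.smul_mem c hx
  | add a b _ _ ha hb =>
    intro x hx
    rw [map_add, LinearMap.add_apply]
    exact W.add_mem (ha x hx) (hb x hx)
  | mul a b _ _ ha hb =>
    intro x hx
    rw [map_mul, Module.End.mul_apply]
    exact ha _ (hb x hx)

theorem Tinv_T_apply (ρ : Hk k →ₐ[k] Module.End k V) (x : V) :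
    ρ (HeckeAlg.Tinv k 0) (ρ (HeckeAlg.T k 0) x) = x := by
  rw [← Module.End.mul_apply, ← map_mul, HeckeAlg.Tinv_mul_T, map_one, Module.End.one_apply]

theorem T_Tinv_apply (ρ : Hk k →ₐ[k] Module.End k V) (x : V) :
    ρ (HeckeAlg.T k 0) (ρ (HeckeAlg.Tinv k 0) x) = x := by
  rw [← Module.End.mul_apply, ← map_mul, HeckeAlg.T_mul_Tinv, map_one, Module.End.one_apply]

theorem isSimplePair_of_simple [Nontrivial V] (ρ : Hk k →ₐ[k] Module.End k V)
    (hsimple : ∀ W : Submodule k V, (∀ a : Hk k, ∀ x ∈ W, ρ a x ∈ W) → W = ⊥ ∨ W = ⊤)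
    {z : k} (hz : ρ (HeckeAlg.T k 0 ^ 3) = algebraMap k (Module.End k V) z) :
    IsSimplePair (ρ (HeckeAlg.T k 0)) (ρ (HeckeAlg.S1 k 0)) z := by
  have hcube (x : V) : ρ (HeckeAlg.T k 0) (ρ (HeckeAlg.T k 0) (ρ (HeckeAlg.T k 0) x)) = z • x := by
    simpa only [pow_three, map_mul, Module.End.mul_apply, Module.algebraMap_end_apply] using
      LinearMap.congr_fun hz x
  have hz₀ : z ≠ 0 := by
    rintro rfl
    obtain ⟨x, hx⟩ := exists_ne (0 : V)
    refine hx ?_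
    rw [← Tinv_T_apply ρ x, ← Tinv_T_apply ρ (ρ (HeckeAlg.T k 0) x),
      ← Tinv_T_apply ρ (ρ (HeckeAlg.T k 0) (ρ (HeckeAlg.T k 0) x)), hcube, zero_smul]
    simp only [map_zero]
  have hTinv (x : V) :
      ρ (HeckeAlg.Tinv k 0) x = z⁻¹ • ρ (HeckeAlg.T k 0) (ρ (HeckeAlg.T k 0) x) := by
    rw [eq_inv_smul_iff₀ hz₀, ← map_smul, ← hcube x, Tinv_T_apply]
  refine ⟨hz₀, hcube, fun W hWT hWS => hsimple W (apply_mem_of_generators ρ hWT ?_ hWS)⟩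
  intro x hx
  rw [hTinv]
  exact W.smul_mem _ (hWT _ (hWT _ hx))

theorem exists_isCentralHeckeAction [Nontrivial V] (ρ : Hk k →ₐ[k] Module.End k V)
    (hsimple : ∀ W : Submodule k V, (∀ a : Hk k, ∀ x ∈ W, ρ a x ∈ W) → W = ⊥ ∨ W = ⊤)
    (hcentral : ∀ a ∈ Subring.center (Hk k), ∃ c : k, ρ a = algebraMap k (Module.End k V) c) :
    ∃ z c₁ c₂ : k, IsCentralHeckeAction (ρ (HeckeAlg.T k 0)) (ρ (HeckeAlg.S1 k 0))
      (ρ (HeckeAlg.S0 k 0)) (ρ (HeckeAlg.S2 k 0)) z c₁ c₂ := by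
  obtain ⟨z, hz⟩ := hcentral _ (HeckeAlg.T_pow_three_mem_center k 0)
  obtain ⟨c₁, hc₁⟩ := hcentral _ (HeckeAlg.T_mul_cyclicSum_mem_center k)
  obtain ⟨c₂, hc₂⟩ := hcentral _ (HeckeAlg.Tinv_mul_cyclicSum_mem_center k)
  have apply {a b : Hk k} (h : a = b) (x : V) : ρ a x = ρ b x := by rw [h]
  refine ⟨z, c₁, c₂, ⟨isSimplePair_of_simple ρ hsimple hz, ?_, ?_, ?_, ?_, ?_, ?_, ?_, ?_⟩⟩
  · simpa using apply (HeckeAlg.S1_mul_S1 k)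
  · simpa using apply (HeckeAlg.semiconjBy_T_S1 k 0).eq.symm
  · simpa using apply (HeckeAlg.semiconjBy_T_S2 k 0).eq.symm
  · simpa using apply (HeckeAlg.semiconjBy_T_S0 k 0).eq.symm
  · simpa using apply (HeckeAlg.braid_rel k 0)
  · simpa using apply (HeckeAlg.S1_mul_S0_mul_S1 k 0)
  · simpa [cyclicSum] using LinearMap.congr_fun hc₁
  · intro x
    have h := congrArg (ρ (HeckeAlg.T k 0)) (LinearMap.congr_fun hc₂ x)
    rw [map_mul, Module.End.mul_apply, T_Tinv_apply, Module.algebraMap_end_apply, map_smul] at h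
    simpa [cyclicSum] using h

end Existence

namespace IsCentralHeckeAction

variable {t s s₀ s₂ : Module.End k V} {z c₁ c₂ : k}

theorem isListed_of_s_eq_zero [Nontrivial V] (h : IsCentralHeckeAction t s s₀ s₂ z c₁ c₂)
    (hs : s = 0) : IsListed t s := by
  have hs₂ (x : V) : s₂ x = 0 := by
    rw [← map_eq_zero_iff t h.injective, ← h.s_t, hs, LinearMap.zero_apply]
  have hs₀ (x : V) : s₀ x = 0 := by
    rw [← map_eq_zero_iff t h.injective, ← h.s₂_t, hs₂]
  obtain ⟨x, hx⟩ := exists_ne (0 : V)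
  have htx : t x = c₁ • x := by simpa [hs, hs₀, hs₂] using h.central₁ x
  obtain ⟨y, hy⟩ := h.isoPair_one hx htx (e := 0) (by rw [hs, zero_smul, LinearMap.zero_apply])
  exact .M₁_zero y hy

section NoCommonEigenvector

variable (h : IsCentralHeckeAction t s s₀ s₂ z c₁ c₂)
  (hno : ∀ w, s₀ w = -w → s w = -w → w = 0)

include h hno

theorem s_s₀_eq_zero {x : V} (hx : s x = -x) : s (s₀ x) = 0 := by
  refine hno _ ?_ (h.s_s _)
  rw [← h.braid_s_s₀, hx, map_neg, map_neg]

theorem s_s₂_eq_zero {x : V} (hx : s x = -x) : s (s₂ x) = 0 := by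
  rw [← map_eq_zero_iff t h.injective]
  refine hno _ ?_ ?_
  · rw [h.s₀_t, h.s_s, map_neg]
  · rw [h.s_t, ← h.braid_s_s₂, hx, map_neg, map_neg, map_neg]

theorem isListed_of_s₂_eq_zero {x : V} (hx₀ : x ≠ 0) (hx : s x = -x) (hs₂x : s₂ x = 0) :
    IsListed t s := by
  have hs₀x : s₀ x = c₂ • t x := by
    simpa [hx, hs₂x, h.s_s₀_eq_zero hno hx] using h.central₂ x
  refine RankOneVector.isListed_of_b_zero h.toIsSimplePair (a := c₂) ⟨hx₀, hx, ?_, ?_⟩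
  · rw [h.s_t, hs₂x, map_zero, zero_smul]
  · rw [h.s_t, h.s₂_t, hs₀x, map_smul, map_smul, h.cube, smul_smul]

theorem isListed_of_s₂_ne_zero {x : V} (hx : s x = -x) (hs₂x : s₂ x ≠ 0) : IsListed t s := by
  have hs_s₂x := h.s_s₂_eq_zero hno hx
  have hx' : s (t (s₂ x)) = -t (s₂ x) := by rw [← h.s_t, h.s_s]
  have hs₂_s₂x : s₂ (s₂ x) = -s₂ x := h.injective <| by rw [← h.s_t, hx', map_neg]
  have hs₂_s₀_s₂x : s₂ (s₀ (s₂ x)) = 0 := by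
    rw [← map_eq_zero_iff t h.injective, ← h.s_t, ← h.s₂_t]
    exact h.s_s₂_eq_zero hno hx'
  have ht_s₀_s₂x : t (s₀ (s₂ x)) = c₁ • s₂ x := by
    simpa [hs_s₂x, hs₂_s₂x, hs₂_s₀_s₂x] using h.central₁ (s₂ x)
  refine RankOneVector.isListed_of_a_zero h.toIsSimplePair (b := c₁) (x := t (s₂ x))
    ⟨h.apply_ne_zero hs₂x, hx', ?_, ?_⟩
  · rw [h.s_t, h.s₂_t, ht_s₀_s₂x, map_smul]
  · rw [h.s_t, h.s₂_t, h.s₀_t, hs_s₂x, map_zero, map_zero, map_zero, zero_mul, zero_smul]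

theorem isListed_of_no_common_eigenvector [Nontrivial V] : IsListed t s := by
  by_cases hs : s = 0
  · exact h.isListed_of_s_eq_zero hs
  obtain ⟨v, hv⟩ : ∃ v, s v ≠ 0 := by
    by_contra! hs'
    exact hs (LinearMap.ext hs')
  by_cases hs₂ : s₂ (s v) = 0
  · exact h.isListed_of_s₂_eq_zero hno hv (h.s_s v) hs₂
  · exact h.isListed_of_s₂_ne_zero hno (h.s_s v) hs₂

end NoCommonEigenvector

end IsCentralHeckeAction

/-- The action of `s` on the `t`-orbits of two vectors `w`, `u`. A common `(-1)`-eigenvector `w` of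
`S₀` and `S₁` gives one, with `u = T⁻¹ S₂ w`, where `c = c₂` and `m = c₁ / z`. -/
structure EigenvectorTable (t s : Module.End k V) (c m : k) (w u : V) : Prop where
  ne_zero : w ≠ 0
  s_w : s w = -w
  s_t_w : s (t w) = t (t u)
  s_t_t_w : s (t (t w)) = -t (t w)
  s_u : s u = c • w
  s_t_u : s (t u) = m • t (t w)
  s_t_t_u : s (t (t u)) = -t (t u)

theorem IsCentralHeckeAction.exists_eigenvectorTable {t s s₀ s₂ : Module.End k V} {z c₁ c₂ : k}
    (h : IsCentralHeckeAction t s s₀ s₂ z c₁ c₂) {w : V} (hw : w ≠ 0) (hs₀w : s₀ w = -w)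
    (hsw : s w = -w) : ∃ u, EigenvectorTable t s c₂ (c₁ / z) w u := by
  have ht_u : t (z⁻¹ • t (t (s₂ w))) = s₂ w := by
    rw [map_smul, h.cube, inv_smul_smul₀ h.ne_zero]
  have hs_tw : s (t w) = t (t (z⁻¹ • t (t (s₂ w)))) := by rw [ht_u, h.s_t]
  have hs_s₂w : t (s (s₂ w)) = c₁ • w := by
    rw [← h.central₁ w, hs₀w, hsw, map_neg, map_neg, hs₀w]
    congr 1
    abel
  have hs₀_s₂w : s₀ (s₂ w) = c₂ • t w := by
    simpa [hs₀w, hsw] using h.central₂ w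
  refine ⟨z⁻¹ • t (t (s₂ w)), hw, hsw, hs_tw, ?_, ?_, ?_, ?_⟩
  · rw [h.s_t, h.s₂_t, hs₀w, map_neg, map_neg]
  · rw [map_smul, h.s_t, h.s₂_t, hs₀_s₂w, map_smul, map_smul, h.cube, smul_comm,
      inv_smul_smul₀ h.ne_zero]
  · apply h.injective
    rw [ht_u, hs_s₂w, map_smul, h.cube, smul_smul, div_mul_cancel₀ _ h.ne_zero]
  · rw [← hs_tw, h.s_s]

namespace EigenvectorTable

variable {t s : Module.End k V} {z c m : k} {w u : V}

theorem isListed_of_m_eq (h : IsSimplePair t s z) (hu : EigenvectorTable t s c m w u)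
    (hm : m = c ^ 2) : IsListed t s := by
  by_cases hd : u + c • w = 0
  · have hu' : u = (-c) • w := by linear_combination (norm := module) hd
    by_cases hx : t w - c • t (t w) = 0
    · have hw : w = c • t w := h.injective (by
        rw [map_smul]
        exact sub_eq_zero.1 hx)
      have hc : c ≠ 0 := by
        rintro rfl
        exact hu.ne_zero (by rw [hw, zero_smul])
      obtain ⟨y, hy⟩ := h.isoPair_one hu.ne_zero ((eq_inv_smul_iff₀ hc).2 hw.symm)
        (hu.s_w.trans (neg_one_smul k w).symm)
      exact .M₁_neg_one y hy
    refine RankOneVector.isListed_of_compl_b_zero h (a := c) ⟨hx, ?_, ?_, ?_⟩ <;>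
    · simp only [LinearMap.sub_apply, LinearMap.neg_apply, Module.End.one_apply, map_sub, map_smul,
        h.cube, hu.s_w, hu.s_t_w, hu.s_t_t_w, hu']
      module
  · refine RankOneVector.isListed_of_b_zero h (a := c)
      ⟨h.apply_ne_zero (h.apply_ne_zero hd), ?_, ?_, ?_⟩ <;>
    · simp only [map_add, map_smul, h.cube, hu.s_w, hu.s_t_w, hu.s_t_t_w, hu.s_u, hu.s_t_u,
        hu.s_t_t_u, hm]
      module

theorem isListed_of_c_eq (h : IsSimplePair t s z) (hu : EigenvectorTable t s c m w u)
    (hc : c = m ^ 2 * z) : IsListed t s := by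
  by_cases hd : u + m • t w = 0
  · have hu' : u = (-m) • t w := by linear_combination (norm := module) hd
    by_cases hx : t w - (m * z) • w = 0
    · obtain ⟨y, hy⟩ := h.isoPair_one hu.ne_zero (sub_eq_zero.1 hx)
        (hu.s_w.trans (neg_one_smul k w).symm)
      exact .M₁_neg_one y hy
    refine RankOneVector.isListed_of_compl_a_zero h (b := m * z) ⟨hx, ?_, ?_, ?_⟩ <;>
    · simp only [LinearMap.sub_apply, LinearMap.neg_apply, Module.End.one_apply, map_sub, map_smul,
        h.cube, hu.s_w, hu.s_t_w, hu.s_t_t_w, hu']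
      module
  · refine RankOneVector.isListed_of_a_zero h (b := m * z)
      ⟨h.apply_ne_zero (h.apply_ne_zero hd), ?_, ?_, ?_⟩ <;>
    · simp only [map_add, map_smul, h.cube, hu.s_w, hu.s_t_w, hu.s_t_t_w, hu.s_u, hu.s_t_u,
        hu.s_t_t_u, hc]
      module

section Generic

variable (h : IsSimplePair t s z) (hu : EigenvectorTable t s c m w u)
include h hu

theorem linearIndependent_w_u (hm : m ≠ c ^ 2) : LinearIndependent k ![w, u] := by
  rw [LinearIndependent.pair_iff' hu.ne_zero]
  rintro r rfl
  have hr : (-r - c) • w = 0 := by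
    linear_combination (norm := skip) hu.s_u
    simp only [map_smul, hu.s_w]
    module
  have hr' : (r ^ 2 - m) • t (t w) = 0 := by
    linear_combination (norm := skip) hu.s_t_u
    simp only [map_smul, hu.s_t_w]
    module
  have hrc := (smul_eq_zero_iff_left hu.ne_zero).1 hr
  have hrm := (smul_eq_zero_iff_left (h.apply_ne_zero (h.apply_ne_zero hu.ne_zero))).1 hr'
  exact hm (by linear_combination -hrm + (c - r) * hrc)

theorem linearIndependent_t_w_u (hc : c ≠ m ^ 2 * z) : LinearIndependent k ![t w, u] := by
  rw [LinearIndependent.pair_iff' (h.apply_ne_zero hu.ne_zero)]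
  rintro r rfl
  have hr : (-r - m) • t (t w) = 0 := by
    linear_combination (norm := skip) hu.s_t_u
    simp only [map_smul, hu.s_t_t_w]
    module
  have hr' : (r ^ 2 * z - c) • w = 0 := by
    linear_combination (norm := skip) hu.s_u
    simp only [map_smul, hu.s_t_w, h.cube]
    module
  have hrm := (smul_eq_zero_iff_left (h.apply_ne_zero (h.apply_ne_zero hu.ne_zero))).1 hr
  have hrc := (smul_eq_zero_iff_left hu.ne_zero).1 hr'
  exact hc (by linear_combination -hrc + (m - r) * z * hrm)

variable (hm : m ≠ c ^ 2) (hc : c ≠ m ^ 2 * z)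
include hm hc

theorem coeff_eq_zero_of_w_ttw_ttu {p q r : k} (hrel : p • w + q • t (t w) + r • t (t u) = 0) :
    p = 0 ∧ q = 0 ∧ r = 0 := by
  have hst := congrArg (fun x => t (s (t x))) hrel
  have hstt := congrArg (fun x => t (s (t (t x)))) hrel
  simp only [map_add, map_smul, map_neg, map_zero, h.cube, hu.s_w, hu.s_t_w, hu.s_t_t_w, hu.s_u,
    hu.s_t_u] at hst hstt
  obtain ⟨-, hp⟩ := LinearIndependent.pair_iff.1 (hu.linearIndependent_t_w_u h hc)
    (z * (r * c - q)) (p * z) (by linear_combination (norm := module) hst)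
  obtain ⟨-, hq⟩ := LinearIndependent.pair_iff.1 (hu.linearIndependent_w_u h hm)
    ((r * m * z - p) * z) (q * z * z) (by linear_combination (norm := module) hstt)
  replace hp : p = 0 := (mul_eq_zero.1 hp).resolve_right h.ne_zero
  replace hq : q = 0 := by simpa [h.ne_zero] using hq
  have hu₀ : u ≠ 0 := (hu.linearIndependent_w_u h hm).ne_zero 1
  refine ⟨hp, hq, (smul_eq_zero_iff_left (h.apply_ne_zero (h.apply_ne_zero hu₀))).1 ?_⟩
  simpa [hp, hq] using hrel

theorem coeff_eq_of_relation {a₀ a₁ a₂ b₀ b₁ b₂ : k}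
    (hrel : (a₀ • u + a₁ • t u + a₂ • t (t u)) + (b₀ • w + b₁ • t w + b₂ • t (t w)) = 0) :
    b₀ = c * a₀ ∧ b₁ = a₂ ∧ b₂ = m * a₁ := by
  have hs := congrArg s hrel
  simp only [map_add, map_smul, map_zero, hu.s_w, hu.s_t_w, hu.s_t_t_w, hu.s_u, hu.s_t_u,
    hu.s_t_t_u] at hs
  obtain ⟨h₀, h₂, h₁⟩ := hu.coeff_eq_zero_of_w_ttw_ttu h hm hc (p := c * a₀ - b₀)
    (q := m * a₁ - b₂) (r := b₁ - a₂) (by linear_combination (norm := module) hs)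
  exact ⟨(sub_eq_zero.1 h₀).symm, sub_eq_zero.1 h₁, (sub_eq_zero.1 h₂).symm⟩

theorem linearIndependent_orbits : LinearIndependent k ![u, t u, t (t u), w, t w, t (t w)] := by
  rw [Fintype.linearIndependent_iff]
  intro a ha
  replace ha : (a 0 • u + a 1 • t u + a 2 • t (t u)) +
      (a 3 • w + a 4 • t w + a 5 • t (t w)) = 0 := by
    simpa [Fin.sum_univ_six, add_assoc] using ha
  have ha' : ((a 2 * z) • u + a 0 • t u + a 1 • t (t u)) +
      ((a 5 * z) • w + a 3 • t w + a 4 • t (t w)) = 0 := by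
    rw [← h.apply_cyclic_combination _ _ _ u, ← h.apply_cyclic_combination _ _ _ w, ← map_add,
      ha, map_zero]
  have ha'' : ((a 1 * z) • u + (a 2 * z) • t u + a 0 • t (t u)) +
      ((a 4 * z) • w + (a 5 * z) • t w + a 3 • t (t w)) = 0 := by
    rw [← h.apply_cyclic_combination _ _ _ u, ← h.apply_cyclic_combination _ _ _ w, ← map_add,
      ha', map_zero]
  obtain ⟨h₃, h₄, h₅⟩ := hu.coeff_eq_of_relation h hm hc ha
  obtain ⟨-, h₃', h₄'⟩ := hu.coeff_eq_of_relation h hm hc ha'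
  obtain ⟨h₄'', -, -⟩ := hu.coeff_eq_of_relation h hm hc ha''
  replace h₄'' : a 4 = c * a 1 := mul_right_cancel₀ h.ne_zero (by rw [h₄'', mul_assoc])
  have h₀ : a 0 = 0 := (mul_eq_zero.1 (show (m - c ^ 2) * a 0 = 0 by
    linear_combination h₄'' - h₄' - c * h₃' + c * h₃)).resolve_left (sub_ne_zero.2 hm)
  have h₁ : a 1 = 0 := by rw [← h₃', h₃, h₀, mul_zero]
  intro i
  fin_cases i
  · exact h₀
  · exact h₁
  · exact h₄.symm.trans (h₄'.trans (by rw [h₀, mul_zero]))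
  · exact h₃'.trans h₁
  · exact h₄'.trans (by rw [h₀, mul_zero])
  · exact h₅.trans (by rw [h₁, mul_zero])

theorem finrank_eq_six : Module.finrank k V = 6 :=
  h.finrank_eq (h.represents_cyclic_six u w)
    (IsSimplePair.represents_six (α := c) (β := m) (γ := 1) hu.s_u hu.s_t_u hu.s_t_t_u hu.s_w
      (by rw [hu.s_t_w, one_smul]) hu.s_t_t_w) (hu.linearIndependent_orbits h hm hc) 0

theorem isListed_of_generic : IsListed t s := by
  have hz := h.ne_zero
  have hn := hu.finrank_eq_six h hm hc
  by_cases hc₀ : c = 0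
  · have hm₀ : m ≠ 0 := by simpa [hc₀] using hm
    refine .L₆ (Units.mk0 z hz) (Units.mk0 (m * z) (mul_ne_zero hm₀ hz))
      (h.isoPair_six hn (v := m⁻¹ • u) hu.ne_zero ?_ ?_ ?_ hu.s_w ?_ hu.s_t_t_w)
    all_goals
      simp [hu.s_u, hu.s_t_u, hu.s_t_t_u, hu.s_t_w, hc₀, hm₀, hz, smul_smul]
  by_cases hm₀ : m = 0
  · refine .Lt₆ (Units.mk0 z hz) (Units.mk0 (z * c) (mul_ne_zero hz hc₀))
      (h.isoPair_six hn (v := c⁻¹ • u) hu.ne_zero ?_ ?_ ?_ hu.s_w ?_ hu.s_t_t_w)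
    all_goals
      simp [hu.s_u, hu.s_t_u, hu.s_t_t_u, hu.s_t_w, hm₀, hc₀, hz, smul_smul]
  · refine .K₆ (Units.mk0 z hz) (Units.mk0 (m * z) (mul_ne_zero hm₀ hz))
      (Units.mk0 (z * c) (mul_ne_zero hz hc₀)) (fun hyy' => hc ?_) (fun hzy => hm ?_)
      (h.isoPair_six hn (v := c⁻¹ • u) hu.ne_zero ?_ ?_ ?_ hu.s_w ?_ hu.s_t_t_w)
    · simp only [Units.val_mk0] at hyy'
      exact mul_left_cancel₀ hz (by linear_combination -hyy')
    · simp only [Units.val_mk0] at hzy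
      exact mul_left_cancel₀ (pow_ne_zero 2 hz) (by linear_combination -hzy)
    all_goals
      simp only [map_smul, hu.s_u, hu.s_t_u, hu.s_t_t_u, hu.s_t_w, Units.val_mk0]
      match_scalars
      field_simp

end Generic

theorem isListed (h : IsSimplePair t s z) (hu : EigenvectorTable t s c m w u) :
    IsListed t s := by
  by_cases hm : m = c ^ 2
  · exact hu.isListed_of_m_eq h hm
  by_cases hc : c = m ^ 2 * z
  · exact hu.isListed_of_c_eq h hc
  · exact hu.isListed_of_generic h hm hc

end EigenvectorTable


theorem IsCentralHeckeAction.isListed [Nontrivial V] {t s s₀ s₂ : Module.End k V} {z c₁ c₂ : k}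
    (h : IsCentralHeckeAction t s s₀ s₂ z c₁ c₂) : IsListed t s := by
  by_cases hno : ∀ w, s₀ w = -w → s w = -w → w = 0
  · exact h.isListed_of_no_common_eigenvector hno
  · push Not at hno
    obtain ⟨w, hs₀w, hsw, hw⟩ := hno
    obtain ⟨u, hu⟩ := h.exists_eigenvectorTable hw hs₀w hsw
    exact hu.isListed h.toIsSimplePair

end SimplePair

theorem statement19_general (k : Type) [Field k] (V : Type) [AddCommGroup V] [Module k V]
    [Nontrivial V] (ρ : Hk k →ₐ[k] Module.End k V)
    (hsimple : ∀ W : Submodule k V, (∀ a : Hk k, ∀ x ∈ W, ρ a x ∈ W) → W = ⊥ ∨ W = ⊤)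
    (hcentral : ∀ a ∈ Subring.center (Hk k), ∃ c : k,
      ρ a = algebraMap k (Module.End k V) c) :
    (∃ y : kˣ, IsoTo k V ρ 1 (Tmat1 k (y : k)) (Tmat1 k 0)) ∨
    (∃ y : kˣ, IsoTo k V ρ 1 (Tmat1 k (y : k)) (Tmat1 k (-1))) ∨
    (∃ y : kˣ, IsoTo k V ρ 2 (Tmat2 k (y : k)) (SM2 k)) ∨
    (∃ y : kˣ, IsoTo k V ρ 2 (Tmat2 k (y : k)) (SMt2 k)) ∨
    (∃ z y y' : kˣ, (y : k) ^ 2 ≠ (y' : k) ∧ (y' : k) ^ 2 ≠ (z : k) * (y : k) ∧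
      IsoTo k V ρ 6 (Tmat6 k (z : k)) (SK6 k (z : k) (y : k) (y' : k))) ∨
    (∃ z y : kˣ, (y : k) ^ 3 ≠ (z : k) ∧ IsoTo k V ρ 3 (Tmat3 k (z : k)) (SM3 k (y : k))) ∨
    (∃ z y : kˣ, (y : k) ^ 3 ≠ (z : k) ∧ IsoTo k V ρ 3 (Tmat3 k (z : k)) (SMt3 k (y : k))) ∨
    (∃ z y : kˣ, (y : k) ^ 3 ≠ (z : k) ∧ IsoTo k V ρ 3 (Tmat3 k (z : k)) (SN3 k (y : k))) ∨
    (∃ z y : kˣ, (y : k) ^ 3 ≠ (z : k) ∧ IsoTo k V ρ 3 (Tmat3 k (z : k)) (SNt3 k (y : k))) ∨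
    (∃ z y : kˣ, IsoTo k V ρ 6 (Tmat6 k (z : k)) (SL6 k (z : k) (y : k))) ∨
    (∃ z y : kˣ, IsoTo k V ρ 6 (Tmat6 k (z : k)) (SLt6 k (z : k) (y : k))) ∨
    (∃ z : kˣ, IsoTo k V ρ 3 (Tmat3 k (z : k)) (SP3 k)) ∨
    (∃ z : kˣ, IsoTo k V ρ 3 (Tmat3 k (z : k)) (SPt3 k)) := by
  obtain ⟨z, c₁, c₂, h⟩ := exists_isCentralHeckeAction ρ hsimple hcentral
  cases h.isListed with
  | M₁_zero y h => left; exact ⟨y, h⟩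
  | M₁_neg_one y h => right; left; exact ⟨y, h⟩
  | M₂ y h => (iterate 2 right); left; exact ⟨y, h⟩
  | Mt₂ y h => (iterate 3 right); left; exact ⟨y, h⟩
  | K₆ z y y' hyy' hzy h => (iterate 4 right); left; exact ⟨z, y, y', hyy', hzy, h⟩
  | M₃ z y hyz h => (iterate 5 right); left; exact ⟨z, y, hyz, h⟩
  | Mt₃ z y hyz h => (iterate 6 right); left; exact ⟨z, y, hyz, h⟩
  | N₃ z y hyz h => (iterate 7 right); left; exact ⟨z, y, hyz, h⟩
  | Nt₃ z y hyz h => (iterate 8 right); left; exact ⟨z, y, hyz, h⟩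
  | L₆ z y h => (iterate 9 right); left; exact ⟨z, y, h⟩
  | Lt₆ z y h => (iterate 10 right); left; exact ⟨z, y, h⟩
  | P₃ z h => (iterate 11 right); left; exact ⟨z, h⟩
  | Pt₃ z h => (iterate 12 right); exact ⟨z, h⟩

/-- Every simple `H_k`-module on which the center of `H_k` acts by scalars
is isomorphic to one of: `M_1(0,y)`, `M_1(-1,y)`, `M_2(y)`, `M̃_2(y)` (`y ∈ k^×`);
`K_6(z,y,y')` (`z,y,y' ∈ k^×`, `y² ≠ y'`, `y'² ≠ zy`); `M_3(z,y)`, `M̃_3(z,y)`, `N_3(z,y)`,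
`Ñ_3(z,y)` (`z,y ∈ k^×`, `y³ ≠ z`); `L_6(z,y)`, `L̃_6(z,y)` (`z,y ∈ k^×`); `P_3(z)`,
`P̃_3(z)` (`z ∈ k^×`). -/
theorem statement19 (p : ℕ) [Fact p.Prime] (k : Type) [Field k] [IsAlgClosed k] [CharP k p]
    (V : Type) [AddCommGroup V] [Module k V] [Nontrivial V]
    (ρ : Hk k →ₐ[k] Module.End k V)
    (hsimple : ∀ W : Submodule k V, (∀ a : Hk k, ∀ x ∈ W, ρ a x ∈ W) → W = ⊥ ∨ W = ⊤)
    (hcentral : ∀ a ∈ Subring.center (Hk k), ∃ c : k,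
      ρ a = algebraMap k (Module.End k V) c) :
    (∃ y : kˣ, IsoTo k V ρ 1 (Tmat1 k (y : k)) (Tmat1 k 0)) ∨
    (∃ y : kˣ, IsoTo k V ρ 1 (Tmat1 k (y : k)) (Tmat1 k (-1))) ∨
    (∃ y : kˣ, IsoTo k V ρ 2 (Tmat2 k (y : k)) (SM2 k)) ∨
    (∃ y : kˣ, IsoTo k V ρ 2 (Tmat2 k (y : k)) (SMt2 k)) ∨
    (∃ z y y' : kˣ, (y : k) ^ 2 ≠ (y' : k) ∧ (y' : k) ^ 2 ≠ (z : k) * (y : k) ∧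
      IsoTo k V ρ 6 (Tmat6 k (z : k)) (SK6 k (z : k) (y : k) (y' : k))) ∨
    (∃ z y : kˣ, (y : k) ^ 3 ≠ (z : k) ∧ IsoTo k V ρ 3 (Tmat3 k (z : k)) (SM3 k (y : k))) ∨
    (∃ z y : kˣ, (y : k) ^ 3 ≠ (z : k) ∧ IsoTo k V ρ 3 (Tmat3 k (z : k)) (SMt3 k (y : k))) ∨
    (∃ z y : kˣ, (y : k) ^ 3 ≠ (z : k) ∧ IsoTo k V ρ 3 (Tmat3 k (z : k)) (SN3 k (y : k))) ∨
    (∃ z y : kˣ, (y : k) ^ 3 ≠ (z : k) ∧ IsoTo k V ρ 3 (Tmat3 k (z : k)) (SNt3 k (y : k))) ∨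
    (∃ z y : kˣ, IsoTo k V ρ 6 (Tmat6 k (z : k)) (SL6 k (z : k) (y : k))) ∨
    (∃ z y : kˣ, IsoTo k V ρ 6 (Tmat6 k (z : k)) (SLt6 k (z : k) (y : k))) ∨
    (∃ z : kˣ, IsoTo k V ρ 3 (Tmat3 k (z : k)) (SP3 k)) ∨
    (∃ z : kˣ, IsoTo k V ρ 3 (Tmat3 k (z : k)) (SPt3 k)) :=
  statement19_general k V ρ hsimple hcentral
end
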